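/- arXiv:1411.6716 — 5 statements merged into one kernel-verified Lean document; each statement's English description precedes it below -/
import Mathlib

section
/- Let A be a real symmetric positive definite matrix whose rows and columns are indexed by multi-indices u with 1 ≤ u_k ≤ J_k (k = 1,…,d), and suppose A is q-banded for some q ∈ ℕ^d and all eigenvalues of A lie in [a,b] with 0 < a < b. Set λ = ((√(b/a) − 1)/(√(b/a) + 1))^{1/(q_1+⋯+q_d)} ∈ (0,1) and C = max{(1+√(b/a))²/(2b), 1/a}. Then for all multi-indices u, v: |(A^{−1})_{u,v}| ≤ C λ^{Σ_{k=1}^d |u_k − v_k|}. -/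
/-- A real matrix indexed by multi-indices `u` with `u k` ranging over `Fin (J k)`
(representing `1 ≤ u_k ≤ J_k`) is `h`-banded if its `(u,v)` entry vanishes whenever
`|u_k − v_k| > h_k` for some `k`. -/
def IsBanded {d : ℕ} (J : Fin d → ℕ) (h : Fin d → ℕ)
    (A : Matrix ((k : Fin d) → Fin (J k)) ((k : Fin d) → Fin (J k)) ℝ) : Prop :=
  ∀ u v : (k : Fin d) → Fin (J k),
    (∃ k : Fin d, (h k : ℤ) < |((u k : ℕ) : ℤ) - ((v k : ℕ) : ℤ)|) → A u v = 0

open Polynomial in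
/-- Spectral bound on entries of `A⁻¹ - p(A)`. -/
lemma aux_entry {n : Type*} [Fintype n] [DecidableEq n] (A : Matrix n n ℝ) (hA : A.IsHermitian)
    (p : ℝ[X]) (M : ℝ) (hpos : ∀ i, 0 < hA.eigenvalues i)
    (hf : ∀ i, |(hA.eigenvalues i)⁻¹ - p.eval (hA.eigenvalues i)| ≤ M) (u v : n) :
    |A⁻¹ u v - (aeval A p) u v| ≤ M := by
  set l := hA.eigenvalues with hl
  obtain ⟨U, hU1, hU2, hAU⟩ : ∃ U : Matrix n n ℝ, U * U.transpose = 1 ∧ U.transpose * U = 1 ∧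
      A = U * Matrix.diagonal l * U.transpose := by
    refine ⟨hA.eigenvectorUnitary, ?_, ?_, ?_⟩
    · have := Unitary.mul_star_self_of_mem hA.eigenvectorUnitary.2
      simpa [Matrix.star_eq_conjTranspose] using this
    · have := Unitary.star_mul_self_of_mem hA.eigenvectorUnitary.2
      simpa [Matrix.star_eq_conjTranspose] using this
    · have := hA.spectral_theorem
      rw [Unitary.conjStarAlgAut_apply] at this
      simpa [Matrix.star_eq_conjTranspose, Function.comp_def] using this
  have hentry : ∀ (f : n → ℝ) (i j : n), (U * Matrix.diagonal f * U.transpose) i j =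
      ∑ k, U i k * f k * U j k := by
    intro f i j
    rw [Matrix.mul_apply]
    simp only [Matrix.mul_diagonal, Matrix.transpose_apply]
  have hp : aeval A p = U * Matrix.diagonal (fun i => p.eval (l i)) * U.transpose := by
    have hpow : ∀ k : ℕ, A ^ k = U * Matrix.diagonal (fun i => l i ^ k) * U.transpose := by
      intro k
      induction k with
      | zero => simp [hU1]
      | succ k ih =>
        rw [pow_succ, ih, hAU]
        calc _ = U * Matrix.diagonal (fun i => l i ^ k) * (U.transpose * U) * Matrix.diagonal l
              * U.transpose := by simp only [Matrix.mul_assoc]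
          _ = U * (Matrix.diagonal (fun i => l i ^ k) * Matrix.diagonal l) * U.transpose := by
              rw [hU2]; simp only [Matrix.mul_assoc, Matrix.one_mul]
          _ = _ := by rw [Matrix.diagonal_mul_diagonal]; simp only [pow_succ]
    rw [aeval_eq_sum_range]
    simp only [eval_eq_sum_range, hpow]
    ext i j
    rw [Matrix.sum_apply]
    simp only [Matrix.smul_apply, hentry, smul_eq_mul, Finset.mul_sum, Finset.sum_mul]
    rw [Finset.sum_comm]
    refine Finset.sum_congr rfl fun _ _ => Finset.sum_congr rfl fun _ _ => by ring
  have hinv : A⁻¹ = U * Matrix.diagonal (fun i => (l i)⁻¹) * U.transpose := by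
    apply Matrix.inv_eq_right_inv
    rw [hAU]
    calc _ = U * Matrix.diagonal l * (U.transpose * U) * Matrix.diagonal (fun i => (l i)⁻¹)
          * U.transpose := by simp only [Matrix.mul_assoc]
      _ = U * (Matrix.diagonal l * Matrix.diagonal (fun i => (l i)⁻¹)) * U.transpose := by
          rw [hU2]; simp only [Matrix.mul_assoc, Matrix.one_mul]
      _ = 1 := by
          rw [Matrix.diagonal_mul_diagonal]
          simp [mul_inv_cancel₀ (hpos _).ne', hU1]
  have hrow : ∀ w, ∑ i, U w i ^ 2 = 1 := by
    intro w
    have := congrFun (congrFun hU1 w) w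
    simpa [Matrix.mul_apply, sq] using this
  have heq : A⁻¹ u v - (aeval A p) u v = ∑ i, U u i * U v i * ((l i)⁻¹ - p.eval (l i)) := by
    rw [hp, hinv, hentry, hentry, ← Finset.sum_sub_distrib]
    exact Finset.sum_congr rfl fun _ _ => by ring
  rw [heq]
  calc _ ≤ ∑ i, |U u i * U v i * ((l i)⁻¹ - p.eval (l i))| := Finset.abs_sum_le_sum_abs _ _
    _ ≤ ∑ i, ((U u i ^ 2 + U v i ^ 2) / 2) * M := by
        refine Finset.sum_le_sum fun i _ => ?_
        rw [abs_mul]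
        refine mul_le_mul ?_ (hf i) (abs_nonneg _) (by positivity)
        rw [abs_le]; constructor <;> nlinarith [sq_nonneg (U u i + U v i), sq_nonneg (U u i - U v i)]
    _ = M := by
        rw [← Finset.sum_mul, ← Finset.sum_div, Finset.sum_add_distrib, hrow, hrow]; ring

/-- Powers of banded matrices. -/
lemma aux_pow_band {d : ℕ} (J q : Fin d → ℕ)
    (A : Matrix ((k : Fin d) → Fin (J k)) ((k : Fin d) → Fin (J k)) ℝ)
    (hband : IsBanded J q A) (j : ℕ) : IsBanded J (fun k => j * q k) (A ^ j) := by
  induction j with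
  | zero =>
    rintro u v ⟨k, hk⟩
    have : u ≠ v := by rintro rfl; simp at hk
    simp [this]
  | succ j ih =>
    rintro u v ⟨k, hk⟩
    rw [pow_succ, Matrix.mul_apply]
    refine Finset.sum_eq_zero fun w _ => ?_
    by_cases h1 : ((j * q k : ℕ) : ℤ) < |((u k : ℕ) : ℤ) - ((w k : ℕ) : ℤ)|
    · rw [ih u w ⟨k, h1⟩, zero_mul]
    · rw [hband w v ⟨k, ?_⟩, mul_zero]
      push Not at h1
      have := abs_sub_le ((u k : ℕ) : ℤ) ((w k : ℕ) : ℤ) ((v k : ℕ) : ℤ)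
      push_cast at h1 hk
      linarith

open Polynomial in
lemma aux_poly_band {d : ℕ} (J q : Fin d → ℕ)
    (A : Matrix ((k : Fin d) → Fin (J k)) ((k : Fin d) → Fin (J k)) ℝ)
    (hband : IsBanded J q A) (n : ℕ) (p : ℝ[X]) (hp : p.natDegree ≤ n)
    (u v : (k : Fin d) → Fin (J k))
    (h : n * ∑ k, q k < ∑ k, (((u k : ℕ) : ℤ) - ((v k : ℕ) : ℤ)).natAbs) :
    (aeval A p) u v = 0 := by
  rw [Finset.mul_sum] at h
  obtain ⟨k, -, hk⟩ := Finset.exists_lt_of_sum_lt h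
  rw [aeval_eq_sum_range, Matrix.sum_apply]
  refine Finset.sum_eq_zero fun i hi => ?_
  rw [Matrix.smul_apply, aux_pow_band J q A hband i u v ⟨k, ?_⟩, smul_zero]
  have hi' : i ≤ n := by have := Finset.mem_range.1 hi; omega
  rw [Int.abs_eq_natAbs]
  have := Nat.mul_le_mul_right (q k) hi'
  exact_mod_cast lt_of_le_of_lt this hk

open Polynomial in
lemma aux_cheb_bound (r y : ℝ) (hr0 : 0 < r) (hr1 : r < 1) (hy : |y| ≤ 1) (n : ℤ) :
    |(Chebyshev.T ℝ (n + 1)).eval y + 2 * r * (Chebyshev.T ℝ n).eval y +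
      r ^ 2 * (Chebyshev.T ℝ (n - 1)).eval y| ≤ 1 + 2 * r * y + r ^ 2 := by
  obtain ⟨h1, h2⟩ := abs_le.1 hy
  have hc := Real.cos_arccos h1 h2
  set t := Real.arccos y
  rw [← hc, Chebyshev.T_real_cos, Chebyshev.T_real_cos, Chebyshev.T_real_cos]
  push_cast
  rw [add_mul, sub_mul, one_mul, Real.cos_add, Real.cos_sub]
  have hs1 := Real.sin_sq_add_cos_sq t
  have hs2 := Real.sin_sq_add_cos_sq (n * t)
  set c := Real.cos t
  set s := Real.sin t
  set C := Real.cos (n * t)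
  set S := Real.sin (n * t)
  rw [← hc] at h1 h2
  apply abs_le_of_sq_le_sq
  · have hS : S ^ 2 = 1 - C ^ 2 := by linarith
    have hs : s ^ 2 = 1 - c ^ 2 := by linarith
    have key : (1 + 2 * r * c + r ^ 2) ^ 2 -
      (C * c - S * s + 2 * r * C + r ^ 2 * (C * c + S * s)) ^ 2 =
      (S * ((1 + r ^ 2) * c + 2 * r) + C * ((1 - r ^ 2) * s)) ^ 2 := by
      have e1 : (1 + 2 * r * c + r ^ 2) ^ 2 = 
        ((1 + r ^ 2) * c + 2 * r) ^ 2 + (1 - r ^ 2) ^ 2 * s ^ 2 := by rw [hs]; ring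
      rw [e1]
      linear_combination -(((1 + r ^ 2) * c + 2 * r) ^ 2 + (1 - r ^ 2) ^ 2 * s ^ 2) * hs2
    nlinarith [sq_nonneg (S * ((1 + r ^ 2) * c + 2 * r) + C * ((1 - r ^ 2) * s))]
  · nlinarith [sq_nonneg (1 - r)]

open Polynomial in
lemma aux_cheb_eval (r : ℝ) (hr0 : 0 < r) (n : ℕ) :
    (Chebyshev.T ℝ (n + 1)).eval (-(r + r⁻¹) / 2) + 2 * r * (Chebyshev.T ℝ n).eval (-(r + r⁻¹) / 2)
      + r ^ 2 * (Chebyshev.T ℝ (n - 1)).eval (-(r + r⁻¹) / 2) =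
      (-r⁻¹) ^ (n + 1) * (1 - r ^ 2) ^ 2 / 2 := by
  have key : ∀ n : ℕ, (Chebyshev.T ℝ n).eval (-(r + r⁻¹) / 2) = ((-r) ^ n + (-r⁻¹) ^ n) / 2 ∧
      (Chebyshev.T ℝ (n + 1)).eval (-(r + r⁻¹) / 2)
        = ((-r) ^ (n + 1) + (-r⁻¹) ^ (n + 1)) / 2 := by
    intro n
    induction n with
    | zero => simp; ring
    | succ n ih =>
      refine ⟨by simpa using ih.2, ?_⟩
      have := Chebyshev.T_add_two ℝ n
      push_cast
      rw [add_assoc, one_add_one_eq_two, this]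
      simp only [eval_sub, eval_mul, eval_X, eval_ofNat, ih.1, ih.2]
      have h1 : r * r⁻¹ = 1 := mul_inv_cancel₀ hr0.ne'
      generalize r⁻¹ = w at *
      linear_combination (((-r) ^ n + (-w) ^ n) / 2) * h1
  cases n with
  | zero => 
    simp
    field_simp
    ring
  | succ n =>
    have h1 := (key n).1
    have h2 := (key n).2
    have h3 := (key (n + 1)).2
    push_cast at *
    rw [h3, h2, show ((n : ℤ) + 1 - 1) = n by ring, h1]
    have h1 : r * r⁻¹ = 1 := mul_inv_cancel₀ hr0.ne'
    generalize r⁻¹ = w at *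
    have hw2 : r ^ 2 * w ^ 2 = 1 := by rw [← mul_pow, h1, one_pow]
    have hw4 : r ^ 4 * w ^ 2 = r ^ 2 := by linear_combination r ^ 2 * hw2
    linear_combination (-w) ^ n * (-h1 + hw2 - hw4 / 2)

open Polynomial in
lemma aux_approx (a s : ℝ) (ha : 0 < a) (hs : 1 < s) (n : ℕ) :
    ∃ p : ℝ[X], p.natDegree ≤ n ∧ ∀ x ∈ Set.Icc a (a * s ^ 2),
      |x⁻¹ - p.eval x| ≤ (1 + s) ^ 2 / (2 * (a * s ^ 2)) * ((s - 1) / (s + 1)) ^ (n + 1) := by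
  set r := (s - 1) / (s + 1) with hr
  have hr0 : 0 < r := div_pos (by linarith) (by linarith)
  have hr1 : r < 1 := by rw [hr, div_lt_one (by linarith)]; linarith
  set h := a * (s ^ 2 - 1) / 2 with hh
  have hh0 : 0 < h := by rw [hh]; nlinarith [mul_pos ha (sub_pos.2 hs)]
  set m := a * (s ^ 2 + 1) / 2 with hm
  have hmr : m = h * (r + r⁻¹) / 2 := by
    rw [hm, hh, hr]
    have : s - 1 ≠ 0 := by linarith
    have : s + 1 ≠ 0 := by linarith
    field_simp
    ring
  set G : ℝ[X] := Chebyshev.T ℝ (n + 1) + C (2 * r) * Chebyshev.T ℝ n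
    + C (r ^ 2) * Chebyshev.T ℝ (n - 1) with hG
  have hGeval : ∀ y, G.eval y = (Chebyshev.T ℝ (n + 1)).eval y + 2 * r * (Chebyshev.T ℝ n).eval y +
      r ^ 2 * (Chebyshev.T ℝ (n - 1)).eval y := by
    intro y; simp only [hG, eval_add, eval_mul, eval_C]
  have hGdeg : G.natDegree ≤ n + 1 := by
    have h1 : (Chebyshev.T ℝ (n + 1)).natDegree ≤ n + 1 := by
      rw [Chebyshev.natDegree_T]; omega
    have h2 : (Chebyshev.T ℝ n).natDegree ≤ n + 1 := by
      rw [Chebyshev.natDegree_T]; omega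
    have h3 : (Chebyshev.T ℝ (n - 1)).natDegree ≤ n + 1 := by
      rw [Chebyshev.natDegree_T]; omega
    exact natDegree_add_le_of_degree_le (natDegree_add_le_of_degree_le h1
      ((natDegree_C_mul_le _ _).trans h2)) ((natDegree_C_mul_le _ _).trans h3)
  set c := ((-r⁻¹) ^ (n + 1) * (1 - r ^ 2) ^ 2 / 2)⁻¹ with hc
  have hr2 : 0 < 1 - r ^ 2 := by nlinarith
  have hc0 : (-r⁻¹) ^ (n + 1) * (1 - r ^ 2) ^ 2 / 2 ≠ 0 := by
    have : -r⁻¹ ≠ 0 := neg_ne_zero.2 (inv_ne_zero hr0.ne')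
    positivity
  set L : ℝ[X] := C h⁻¹ * X + C (-(m / h)) with hL
  set R : ℝ[X] := C c * G.comp L with hR
  have hReval : ∀ x, R.eval x = c * G.eval ((x - m) / h) := by
    intro x
    simp only [hR, hL, eval_mul, eval_C, eval_comp, eval_add, eval_X]
    congr 2; ring
  have hR0 : R.eval 0 = 1 := by
    rw [hReval, hGeval, show (0 - m) / h = -(r + r⁻¹) / 2 by rw [hmr]; field_simp; ring,
      aux_cheb_eval r hr0, hc, inv_mul_cancel₀ hc0]
  have hRdeg : R.natDegree ≤ n + 1 := by
    refine (natDegree_C_mul_le _ _).trans (natDegree_comp_le.trans ?_)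
    calc _ ≤ (n + 1) * 1 := Nat.mul_le_mul hGdeg natDegree_linear_le
      _ = _ := mul_one _
  have hdeg : (1 - R).natDegree ≤ n + 1 := by
    refine (natDegree_sub_le _ _).trans ?_
    simp [hRdeg]
  refine ⟨(1 - R).divX, ?_, ?_⟩
  · rw [natDegree_divX_eq_natDegree_tsub_one]; omega
  · rintro x ⟨hx1, hx2⟩
    have hx0 : 0 < x := by linarith
    have hdiv : (1 - R).divX.eval x * x = 1 - R.eval x := by
      have := congrArg (eval x) (divX_mul_X_add (1 - R))
      rw [coeff_zero_eq_eval_zero] at this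
      simpa [hR0] using this
    have e1 : x⁻¹ - (1 - R).divX.eval x = R.eval x / x := by
      field_simp
      linarith
    rw [e1, abs_div, abs_of_pos hx0, div_le_iff₀ hx0, hReval, abs_mul]
    have hy : |(x - m) / h| ≤ 1 := by
      rw [abs_le, le_div_iff₀ hh0, div_le_iff₀ hh0]
      constructor <;> · rw [hm, hh]; linarith
    have hb := aux_cheb_bound r _ hr0 hr1 hy n
    rw [← hGeval] at hb
    have hxx : 1 + 2 * r * ((x - m) / h) + r ^ 2 = 2 * r / h * x := by
      rw [hmr]; field_simp; ring
    rw [hxx] at hb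
    have hcabs : |c| = r ^ (n + 1) * (2 / (1 - r ^ 2) ^ 2) := by
      rw [hc, abs_inv, abs_div, abs_mul, abs_pow, abs_neg, abs_of_pos (inv_pos.2 hr0),
        abs_of_pos (pow_pos hr2 2), abs_of_pos (two_pos : (0 : ℝ) < 2), inv_pow]
      field_simp
    refine (mul_le_mul_of_nonneg_left hb (abs_nonneg _)).trans (le_of_eq ?_)
    rw [hcabs]
    have : 2 / (1 - r ^ 2) ^ 2 * (2 * r / h) = (1 + s) ^ 2 / (2 * (a * s ^ 2)) := by
      have h1 : 1 - r ^ 2 = 4 * s / (s + 1) ^ 2 := by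
        rw [hr]; have : s + 1 ≠ 0 := by linarith
        field_simp; ring
      have h2 : r / h = 2 / (a * (s + 1) ^ 2) := by
        rw [hr, hh, show s ^ 2 - 1 = (s - 1) * (s + 1) by ring]
        have : s - 1 ≠ 0 := by linarith
        have : s + 1 ≠ 0 := by linarith
        field_simp
      rw [mul_div_assoc, h1, h2]
      have : s + 1 ≠ 0 := by linarith
      have : s ≠ 0 := by linarith
      field_simp
      ring
    rw [← this]; ring

/-- If `A` is symmetric positive definite, `q`-banded, with all
eigenvalues in `[a,b]`, `0 < a < b`, then, with
`λ = ((√(b/a) − 1)/(√(b/a) + 1))^(1/(q_1+⋯+q_d))` and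
`C = max ((1+√(b/a))²/(2b)) (1/a)`, every entry of `A⁻¹` satisfies
`|(A⁻¹)_{u,v}| ≤ C · λ^(Σ_k |u_k − v_k|)`. -/
theorem statement2 {d : ℕ} (hd : 1 ≤ d) (J : Fin d → ℕ) (hJ : ∀ k, 1 ≤ J k)
    (q : Fin d → ℕ) (hq : ∀ k, 1 ≤ q k)
    (A : Matrix ((k : Fin d) → Fin (J k)) ((k : Fin d) → Fin (J k)) ℝ)
    (hA : A.PosDef)
    (a b : ℝ) (ha : 0 < a) (hab : a < b)
    (heig : ∀ i, hA.1.eigenvalues i ∈ Set.Icc a b)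
    (hband : IsBanded J q A) :
    ∀ u v : (k : Fin d) → Fin (J k),
      |A⁻¹ u v| ≤
        max ((1 + Real.sqrt (b / a)) ^ 2 / (2 * b)) (1 / a) *
          (((Real.sqrt (b / a) - 1) / (Real.sqrt (b / a) + 1)) ^
              ((1 : ℝ) / ∑ k, (q k : ℝ))) ^
            (∑ k, (((u k : ℕ) : ℤ) - ((v k : ℕ) : ℤ)).natAbs) := by
  intro u v
  set s := Real.sqrt (b / a) with hs
  have hba : 1 < b / a := by rw [lt_div_iff₀ ha]; linarith
  have hs1 : 1 < s := by rw [hs, Real.lt_sqrt (by norm_num)]; simpa using hba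
  have hbs : a * s ^ 2 = b := by
    rw [hs, Real.sq_sqrt (by linarith)]; field_simp
  set r := (s - 1) / (s + 1) with hr
  have hr0 : 0 < r := div_pos (by linarith) (by linarith)
  have hr1 : r < 1 := by rw [hr, div_lt_one (by linarith)]; linarith
  have hpos : ∀ i, 0 < hA.1.eigenvalues i := fun i => ha.trans_le (heig i).1
  set D := ∑ k, (((u k : ℕ) : ℤ) - ((v k : ℕ) : ℤ)).natAbs with hD
  have hQ : 0 < ∑ k, q k :=
    Finset.sum_pos (fun k _ => hq k) ⟨⟨0, hd⟩, Finset.mem_univ _⟩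
  set Q := ∑ k, q k with hQdef
  have hQc : ∑ k, (q k : ℝ) = (Q : ℝ) := by rw [hQdef]; push_cast; rfl
  rw [hQc]
  rcases Nat.eq_zero_or_pos D with hD0 | hD0
  · rw [hD0, pow_zero, mul_one]
    refine le_trans ?_ (le_max_right _ _)
    have := aux_entry A hA.1 0 (1 / a) hpos (fun i => by
      rw [Polynomial.eval_zero, sub_zero, abs_of_pos (inv_pos.2 (hpos i)), one_div]
      exact inv_anti₀ ha (heig i).1) u v
    simpa using this
  · set n := (D - 1) / Q with hn
    have hn1 : n * Q < D := by
      have := Nat.div_mul_le_self (D - 1) Q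
      rw [← hn] at this
      omega
    have hn2 : D ≤ (n + 1) * Q := by
      have := Nat.lt_div_mul_add hQ (a := D - 1)
      rw [← hn] at this
      rw [add_mul, one_mul]
      omega
    obtain ⟨p, hp, hpx⟩ := aux_approx a s ha hs1 n
    rw [hbs] at hpx
    have h1 := aux_entry A hA.1 p _ hpos (fun i => hpx _ (heig i)) u v
    rw [aux_poly_band J q A hband n p hp u v hn1, sub_zero] at h1
    refine h1.trans ?_
    refine mul_le_mul (le_max_left _ _) ?_ (by positivity) (le_max_of_le_right (by positivity))
    rw [← Real.rpow_natCast (_ ^ _), ← Real.rpow_mul hr0.le, ← Real.rpow_natCast]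
    apply Real.rpow_le_rpow_of_exponent_ge hr0 hr1.le
    have hQ' : (0 : ℝ) < Q := by exact_mod_cast hQ
    rw [one_div_mul_eq_div, div_le_iff₀ hQ']
    exact_mod_cast hn2
end

section
/- Fix d ≥ 1, q ∈ ℕ^d and 0 < a < b. There is a constant C' > 0, depending only on a, b, q and d (not on J or on the matrix), with the following property: for every J = (J_1,…,J_d) ∈ ℕ^d, every τ > 0, and every real symmetric positive definite matrix A indexed by multi-indices 1 ≤ u_k ≤ J_k that is q-banded and has all its eigenvalues in [aτ, bτ], one has ‖A^{−1}‖_{(∞,∞)} ≤ C'/τ. -/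
open scoped Matrix.Norms.L2Operator in
lemma aux_entry_s3 {n : Type*} [Fintype n] [DecidableEq n] (M : Matrix n n ℝ) (u v : n) :
    |M u v| ≤ ‖M‖ := by
  have h := Matrix.l2_opNorm_mulVec M (EuclideanSpace.single v (1:ℝ))
  have h2 := PiLp.norm_apply_le ((EuclideanSpace.equiv n ℝ).symm (Matrix.mulVec M (EuclideanSpace.single v (1:ℝ)))) u
  simp at h h2
  exact h2.trans h

open scoped Matrix.Norms.L2Operator in
lemma aux_norm {n : Type*} [Fintype n] [DecidableEq n] (A : Matrix n n ℝ) (hA : A.IsHermitian)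
    (c r : ℝ) (hr : 0 ≤ r) (h : ∀ i, |1 - c * hA.eigenvalues i| ≤ r) : ‖1 - c • A‖ ≤ r := by
  have h1 : 1 - c • A = (hA.eigenvectorUnitary : Matrix n n ℝ) *
      Matrix.diagonal (fun i => 1 - c * hA.eigenvalues i) *
      star (hA.eigenvectorUnitary : Matrix n n ℝ) := by
    have e : Matrix.diagonal (fun i => 1 - c * hA.eigenvalues i) =
      1 - c • Matrix.diagonal hA.eigenvalues := by
      ext i j
      by_cases hij : i = j
      · subst hij; simp
      · simp [hij]
    have s := hA.spectral_theorem
    rw [Unitary.conjStarAlgAut_apply] at s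
    have s' : A = (hA.eigenvectorUnitary : Matrix n n ℝ) * Matrix.diagonal hA.eigenvalues *
      star (hA.eigenvectorUnitary : Matrix n n ℝ) := s
    rw [e, mul_sub, sub_mul, mul_one, Unitary.mul_star_self_of_mem hA.eigenvectorUnitary.2,
      mul_smul_comm, smul_mul_assoc, ← s']
  rw [h1, mul_assoc, CStarRing.norm_mem_unitary_mul _ hA.eigenvectorUnitary.2,
    CStarRing.norm_mul_mem_unitary _ (Unitary.star_mem hA.eigenvectorUnitary.2),
    Matrix.l2_opNorm_diagonal, pi_norm_le_iff_of_nonneg hr]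
  exact h

lemma aux_banded_pow {d : ℕ} (J q : Fin d → ℕ)
    (B : Matrix ((k : Fin d) → Fin (J k)) ((k : Fin d) → Fin (J k)) ℝ) (hB : IsBanded J q B)
    (n : ℕ) : IsBanded J (fun k => n * q k) (B ^ n) := by
  induction n with
  | zero =>
    rintro u v ⟨k, hk⟩
    have : u ≠ v := by rintro rfl; simp at hk
    simp [this]
  | succ n ih =>
    rintro u v ⟨k, hk⟩
    rw [pow_succ, Matrix.mul_apply]
    refine Finset.sum_eq_zero fun w _ => ?_
    by_cases h1 : ((n * q k : ℕ) : ℤ) < |((u k : ℕ) : ℤ) - ((w k : ℕ) : ℤ)|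
    · rw [ih u w ⟨k, h1⟩, zero_mul]
    · rw [hB w v ⟨k, ?_⟩, mul_zero]
      have := abs_sub_le ((u k : ℕ) : ℤ) ((w k : ℕ) : ℤ) ((v k : ℕ) : ℤ)
      push_cast at *
      nlinarith

lemma aux_count {J : ℕ} (u : Fin J) (m : ℕ) :
    (Finset.univ.filter fun x : Fin J => |((u : ℕ) : ℤ) - ((x : ℕ) : ℤ)| ≤ m).card ≤ 2 * m + 1 := by
  have : (Finset.Icc (((u : ℕ) : ℤ) - m) (((u : ℕ) : ℤ) + m)).card = 2 * m + 1 := by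
    rw [Int.card_Icc]; omega
  rw [← this]
  refine Finset.card_le_card_of_injOn (fun x => ((x : ℕ) : ℤ)) ?_ ?_
  · intro x hx
    simp [abs_le] at hx ⊢
    omega
  · intro x _ y _ h
    simpa [Fin.ext_iff] using h

lemma aux_row {d : ℕ} (J q : Fin d → ℕ)
    (B : Matrix ((k : Fin d) → Fin (J k)) ((k : Fin d) → Fin (J k)) ℝ) (n : ℕ)
    (hB : IsBanded J (fun k => n * q k) B) (r : ℝ) (hr : 0 ≤ r) (h : ∀ u v, |B u v| ≤ r)
    (u : (k : Fin d) → Fin (J k)) :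
    ∑ v, |B u v| ≤ (((n : ℝ) + 1) ^ d * ∏ k, (2 * (q k : ℝ) + 1)) * r := by
  set S := Fintype.piFinset fun k => Finset.univ.filter
    fun x : Fin (J k) => |((u k : ℕ) : ℤ) - ((x : ℕ) : ℤ)| ≤ (n * q k : ℕ) with hS
  have h1 : ∑ v, |B u v| = ∑ v ∈ S, |B u v| := by
    symm
    refine Finset.sum_subset (Finset.subset_univ _) fun v _ hv => ?_
    rw [hS, Fintype.mem_piFinset] at hv
    push Not at hv
    obtain ⟨k, hk⟩ := hv
    rw [hB u v ⟨k, by simpa using hk⟩, abs_zero]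
  have h2 : (S.card : ℝ) ≤ ((n : ℝ) + 1) ^ d * ∏ k, (2 * (q k : ℝ) + 1) := by
    rw [hS, Fintype.card_piFinset]
    have : ((n : ℝ) + 1) ^ d * ∏ k, (2 * (q k : ℝ) + 1) =
        ∏ k, (((n : ℝ) + 1) * (2 * (q k : ℝ) + 1)) := by
      rw [Finset.prod_mul_distrib]; simp
    rw [this]
    push_cast
    refine Finset.prod_le_prod (fun _ _ => by positivity) fun k _ => ?_
    have h3 : ((Finset.univ.filter fun x : Fin (J k) =>
        |((u k : ℕ) : ℤ) - ((x : ℕ) : ℤ)| ≤ (n * q k : ℕ)).card : ℝ) ≤ 2 * (n * q k) + 1 := by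
      exact_mod_cast aux_count (u k) (n * q k)
    push_cast at h3
    refine h3.trans ?_
    have : (0:ℝ) ≤ n := by positivity
    have : (0:ℝ) ≤ q k := by positivity
    nlinarith
  rw [h1]
  calc ∑ v ∈ S, |B u v| ≤ ∑ v ∈ S, r := Finset.sum_le_sum fun v _ => h u v
    _ = S.card * r := by simp
    _ ≤ _ := by gcongr

lemma aux_summable (d : ℕ) (P r : ℝ) (hr : 0 < r) (hr1 : r < 1) :
    Summable fun n : ℕ => (((n : ℝ) + 1) ^ d * P) * r ^ n := by
  have h := summable_pow_mul_geometric_of_norm_lt_one (R := ℝ) d (r := r)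
    (by rwa [Real.norm_of_nonneg hr.le])
  have h2 := ((summable_nat_add_iff 1).2 h).mul_left (P * r⁻¹)
  refine h2.congr fun n => ?_
  push_cast
  field_simp
  ring

open scoped Matrix.Norms.L2Operator in
theorem aux_main (d : ℕ) (q : Fin d → ℕ) (a b : ℝ) (ha : 0 < a) (hab : a < b) :
    ∃ C' > (0 : ℝ), ∀ (J : Fin d → ℕ), ∀ τ : ℝ, 0 < τ →
      ∀ (A : Matrix ((k : Fin d) → Fin (J k)) ((k : Fin d) → Fin (J k)) ℝ)
        (hA : A.PosDef), IsBanded J q A →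
        (∀ i, hA.1.eigenvalues i ∈ Set.Icc (a * τ) (b * τ)) →
        ∀ u : (k : Fin d) → Fin (J k), ∑ v, |A⁻¹ u v| ≤ C' / τ := by
  have hb : 0 < b := ha.trans hab
  set r : ℝ := 1 - a / b with hr
  have hr0 : 0 < r := by rw [hr, sub_pos, div_lt_one hb]; exact hab
  have hr1 : r < 1 := by have : 0 < a / b := by positivity
                         linarith
  set P : ℝ := ∏ k, (2 * (q k : ℝ) + 1) with hP
  have hP0 : 0 ≤ P := Finset.prod_nonneg fun _ _ => by positivity
  have hs := aux_summable d P r hr0 hr1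
  set T : ℝ := ∑' n : ℕ, (((n : ℝ) + 1) ^ d * P) * r ^ n with hT
  have hT0 : 0 ≤ T := tsum_nonneg fun n => by positivity
  refine ⟨(T + 1) / b, by positivity, fun J τ hτ A hA hband hev u => ?_⟩
  set c : ℝ := 1 / (b * τ) with hc
  have hc0 : 0 < c := by positivity
  set B := 1 - c • A with hB
  have hBn : ‖B‖ ≤ r := by
    refine aux_norm A hA.1 c r hr0.le fun i => ?_
    obtain ⟨h1, h2⟩ := hev i
    have e1 : a / b ≤ c * hA.1.eigenvalues i := by
      calc a / b = c * (a * τ) := by rw [hc]; field_simp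
        _ ≤ _ := by gcongr
    have e2 : c * hA.1.eigenvalues i ≤ 1 := by
      calc _ ≤ c * (b * τ) := by gcongr
        _ = 1 := by rw [hc]; field_simp
    rw [abs_of_nonneg (by linarith)]
    linarith
  have hBb : IsBanded J q B := by
    rintro v w ⟨k, hk⟩
    have hne : v ≠ w := by
      rintro rfl
      simp at hk
      omega
    rw [hB, Matrix.sub_apply, Matrix.smul_apply, hband v w ⟨k, hk⟩, Matrix.one_apply_ne hne]
    simp
  have hBpow : ∀ n, 1 ≤ n → ‖B ^ n‖ ≤ r ^ n := fun n hn =>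
    (norm_pow_le' B hn).trans (by gcongr)
  have hent : ∀ n v w, |(B ^ n) v w| ≤ r ^ n := by
    intro n v w
    rcases Nat.eq_zero_or_pos n with rfl | hn
    · rw [pow_zero, pow_zero, Matrix.one_apply]; split_ifs <;> simp
    · exact (aux_entry_s3 _ v w).trans (hBpow n hn)
  have hdet : IsUnit A.det := (Matrix.isUnit_iff_isUnit_det A).1 hA.isUnit
  have hid : ∀ N : ℕ, A⁻¹ = c • (∑ n ∈ Finset.range N, B ^ n) + B ^ N * A⁻¹ := by
    intro N
    have h := geom_sum_mul_neg B N
    have h1 : 1 - B = c • A := by rw [hB]; abel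
    rw [h1, mul_smul_comm] at h
    have h2 : B ^ N = 1 - c • ((∑ n ∈ Finset.range N, B ^ n) * A) := by rw [h]; abel
    rw [h2, sub_mul, smul_mul_assoc, mul_assoc, Matrix.mul_nonsing_inv A hdet]
    simp
  set K : ℝ := ((Fintype.card ((k : Fin d) → Fin (J k)) : ℕ) : ℝ) with hK
  have hbound : ∀ N : ℕ, ∑ v, |A⁻¹ u v| ≤ c * T + K * (‖A⁻¹‖ * r ^ (N + 1)) := by
    intro N
    have h1 : ∀ v, |A⁻¹ u v| ≤ c * (∑ n ∈ Finset.range (N + 1), |(B ^ n) u v|)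
        + ‖A⁻¹‖ * r ^ (N + 1) := by
      intro v
      conv_lhs => rw [hid (N + 1)]
      rw [Matrix.add_apply, Matrix.smul_apply, Matrix.sum_apply]
      refine (abs_add_le _ _).trans (add_le_add ?_ ?_)
      · rw [smul_eq_mul, abs_mul, abs_of_pos hc0]
        gcongr
        exact Finset.abs_sum_le_sum_abs _ _
      · refine (aux_entry_s3 _ u v).trans ((norm_mul_le _ _).trans ?_)
        rw [mul_comm]
        gcongr
        exact hBpow _ (by omega)
    calc ∑ v, |A⁻¹ u v| ≤ ∑ v, (c * (∑ n ∈ Finset.range (N + 1), |(B ^ n) u v|)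
        + ‖A⁻¹‖ * r ^ (N + 1)) := Finset.sum_le_sum fun v _ => h1 v
      _ = c * (∑ n ∈ Finset.range (N + 1), ∑ v, |(B ^ n) u v|) + K * (‖A⁻¹‖ * r ^ (N + 1)) := by
        rw [Finset.sum_add_distrib, ← Finset.mul_sum, Finset.sum_comm]; simp [hK]
      _ ≤ c * T + K * (‖A⁻¹‖ * r ^ (N + 1)) := by
        gcongr
        refine le_trans (Finset.sum_le_sum fun n _ => ?_)
          (hs.sum_le_tsum (Finset.range (N + 1)) fun n _ => by positivity)
        exact aux_row J q (B ^ n) n (aux_banded_pow J q B hBb n) (r ^ n) (by positivity) (hent n) u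
  have hlim : Filter.Tendsto (fun N : ℕ => c * T + K * (‖A⁻¹‖ * r ^ (N + 1))) Filter.atTop
      (nhds (c * T + K * (‖A⁻¹‖ * 0))) := by
    refine Filter.Tendsto.const_add _ (Filter.Tendsto.const_mul _ (Filter.Tendsto.const_mul _ ?_))
    exact (tendsto_pow_atTop_nhds_zero_of_lt_one hr0.le hr1).comp (Filter.tendsto_add_atTop_nat 1)
  have h := ge_of_tendsto' hlim hbound
  refine h.trans ?_
  rw [mul_zero, mul_zero, add_zero, div_div, hc, div_mul_eq_mul_div, one_mul]
  gcongr
  linarith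

/-- Fix `d ≥ 1`, `q ∈ ℕ^d` and `0 < a < b`. There is a constant `C' > 0`
depending only on `a, b, q, d` such that for every `J`, every `τ > 0` and every symmetric
positive definite `q`-banded matrix `A` (indexed by multi-indices `1 ≤ u_k ≤ J_k`) with all
eigenvalues in `[aτ, bτ]`, the `(∞,∞)`-operator norm of `A⁻¹` (the maximum over rows of the
sum of absolute values of the entries) is at most `C'/τ`. -/
theorem statement3 (d : ℕ) (hd : 1 ≤ d) (q : Fin d → ℕ) (hq : ∀ k, 1 ≤ q k)
    (a b : ℝ) (ha : 0 < a) (hab : a < b) :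
    ∃ C' > (0 : ℝ), ∀ (J : Fin d → ℕ), (∀ k, 1 ≤ J k) → ∀ τ : ℝ, 0 < τ →
      ∀ (A : Matrix ((k : Fin d) → Fin (J k)) ((k : Fin d) → Fin (J k)) ℝ)
        (hA : A.PosDef), IsBanded J q A →
        (∀ i, hA.1.eigenvalues i ∈ Set.Icc (a * τ) (b * τ)) →
        ∀ u : (k : Fin d) → Fin (J k), ∑ v, |A⁻¹ u v| ≤ C' / τ := by
  obtain ⟨C, hC, h⟩ := aux_main d q a b ha hab
  exact ⟨C, hC, fun J _ => h J⟩
end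

section
/- Let B be a real n × J matrix with BᵀB invertible (hence symmetric positive definite) and let Ω be a real J × J symmetric positive definite matrix. Define P_B = B(BᵀB)^{−1}Bᵀ and V = B(BᵀB)^{−1}[Ω + (BᵀB)^{−1}]^{−1}(BᵀB)^{−1}Bᵀ. Then Bᵀ(I_n − P_B + V)²B = [Ω + (BᵀB)^{−1}]^{−1}(BᵀB)^{−1}[Ω + (BᵀB)^{−1}]^{−1}, and in the Loewner order [Ω + (BᵀB)^{−1}]^{−1}(BᵀB)^{−1}[Ω + (BᵀB)^{−1}]^{−1} ≤ [Ω + (BᵀB)^{−1}]^{−1} ≤ BᵀB. -/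
open Matrix

/-- Let `B` be a real `n × J` matrix with `BᵀB` invertible and `Ω` a real
symmetric positive definite `J × J` matrix. With `P_B = B(BᵀB)⁻¹Bᵀ` and
`V = B(BᵀB)⁻¹[Ω + (BᵀB)⁻¹]⁻¹(BᵀB)⁻¹Bᵀ` one has
`Bᵀ(I_n − P_B + V)²B = [Ω + (BᵀB)⁻¹]⁻¹(BᵀB)⁻¹[Ω + (BᵀB)⁻¹]⁻¹`, and in the Loewner order
`[Ω + (BᵀB)⁻¹]⁻¹(BᵀB)⁻¹[Ω + (BᵀB)⁻¹]⁻¹ ≤ [Ω + (BᵀB)⁻¹]⁻¹ ≤ BᵀB` (i.e. the differences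
are positive semidefinite). -/
theorem statement8 (n J : ℕ) (B : Matrix (Fin n) (Fin J) ℝ)
    (Ω : Matrix (Fin J) (Fin J) ℝ) (hB : IsUnit (Bᵀ * B)) (hΩ : Ω.PosDef) :
    Bᵀ * (1 - B * (Bᵀ * B)⁻¹ * Bᵀ +
          B * (Bᵀ * B)⁻¹ * (Ω + (Bᵀ * B)⁻¹)⁻¹ * (Bᵀ * B)⁻¹ * Bᵀ) ^ 2 * B =
        (Ω + (Bᵀ * B)⁻¹)⁻¹ * (Bᵀ * B)⁻¹ * (Ω + (Bᵀ * B)⁻¹)⁻¹ ∧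
      ((Ω + (Bᵀ * B)⁻¹)⁻¹ -
        (Ω + (Bᵀ * B)⁻¹)⁻¹ * (Bᵀ * B)⁻¹ * (Ω + (Bᵀ * B)⁻¹)⁻¹).PosSemidef ∧
      (Bᵀ * B - (Ω + (Bᵀ * B)⁻¹)⁻¹).PosSemidef := by
  have hG : (Bᵀ * B).PosSemidef := by
    have := posSemidef_conjTranspose_mul_self B
    rwa [conjTranspose_eq_transpose_of_trivial] at this
  have hS : (Ω + (Bᵀ * B)⁻¹).PosDef := hΩ.add_posSemidef hG.inv
  have hSu := (Matrix.isUnit_iff_isUnit_det _).1 hS.isUnit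
  have hGu := (Matrix.isUnit_iff_isUnit_det _).1 hB
  have hT := hS.inv.isHermitian
  have h1 := Matrix.mul_nonsing_inv _ hSu
  have h2 := Matrix.nonsing_inv_mul _ hSu
  have h3 := Matrix.mul_nonsing_inv _ hGu
  have h4 := Matrix.nonsing_inv_mul _ hGu
  generalize hTd : (Ω + (Bᵀ * B)⁻¹)⁻¹ = T at *
  generalize hHd : (Bᵀ * B)⁻¹ = H at *
  refine ⟨?_, ?_, ?_⟩
  · have hr : (1 - B * H * Bᵀ + B * H * T * H * Bᵀ) * B = B * H * T := by
      have : (1 - B * H * Bᵀ + B * H * T * H * Bᵀ) * B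
          = B - B * (H * (Bᵀ * B)) + B * H * T * (H * (Bᵀ * B)) := by
        simp only [Matrix.add_mul, Matrix.sub_mul, Matrix.one_mul, Matrix.mul_assoc]
      rw [this, h4]; simp
    have hl : Bᵀ * (1 - B * H * Bᵀ + B * H * T * H * Bᵀ) = T * H * Bᵀ := by
      have : Bᵀ * (1 - B * H * Bᵀ + B * H * T * H * Bᵀ)
          = Bᵀ - (Bᵀ * B * H) * Bᵀ + (Bᵀ * B * H) * (T * H * Bᵀ) := by
        simp only [Matrix.mul_add, Matrix.mul_sub, Matrix.mul_one, Matrix.mul_assoc]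
      rw [this, h3]; simp
    rw [pow_two, ← Matrix.mul_assoc, hl, Matrix.mul_assoc, hr]
    have : T * H * Bᵀ * (B * H * T) = T * H * (Bᵀ * B * H) * T := by
      simp only [Matrix.mul_assoc]
    rw [this, h3, Matrix.mul_one]
  · have e : T - T * H * T = T * Ω * T := by
      have : T * Ω * T = T * (Ω + H) * T - T * H * T := by noncomm_ring
      rw [this, h2, Matrix.one_mul]
    rw [e]
    have := hΩ.posSemidef.conjTranspose_mul_mul_same T
    rwa [hT.eq] at this
  · generalize hGd : Bᵀ * B = G at *
    have e1 : G - T = T * Ω * G := by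
      have : T * Ω * G = T * (Ω + H) * G - T * (H * G) := by noncomm_ring
      rw [this, h2, h4, Matrix.one_mul, Matrix.mul_one]
    have e : G - T = T * (Ω + Ω * G * Ω) * T := by
      have : T * (Ω + Ω * G * Ω) * T
          = T * Ω * G * ((Ω + H) * T) - T * Ω * (G * H) * T + T * Ω * T := by noncomm_ring
      rw [this, h1, h3, e1]; simp
    rw [e]
    have k := hG.conjTranspose_mul_mul_same Ω
    rw [hΩ.isHermitian.eq] at k
    have := (hΩ.posSemidef.add k).conjTranspose_mul_mul_same T
    rwa [hT.eq] at this
end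

section
/- There is a constant C > 0, depending only on q = (q_1,…,q_d), d, the quasi-uniformity constant C₀ and K_max, such that the following holds. Suppose each direction's knot sequence is quasi-uniform with constant C₀; suppose G is a cumulative distribution function on [0,1]^d whose density is bounded above by K_max; and suppose the design points X_1,…,X_n ∈ [0,1]^d satisfy sup_{x∈[0,1]^d} |G_n(x) − G(x)| ≤ ∏_{k=1}^d N_k^{−1}, where G_n is their empirical distribution function. Then for every multi-index j = (j_1,…,j_d) with 1 ≤ j_k ≤ J_k and every p = (p_1,…,p_d) ∈ ℕ^d: Σ_{i=1}^n ∏_{k=1}^d B_{j_k,q_k}(X_{ik})^{p_k} ≤ C n ∏_{k=1}^d J_k^{−1}. -/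
open MeasureTheory

/-- A knot sequence `0 = t 0 < t 1 < ⋯ < t N < t (N+1) = 1` on `[0,1]` with `N` interior
knots. -/
structure KnotSeq where
  N : ℕ
  t : ℕ → ℝ
  t0 : t 0 = 0
  tN : t (N + 1) = 1
  mono : ∀ l, l < N + 1 → t l < t (l + 1)

namespace KnotSeq

/-- The extended knot sequence: the boundary knots `0` and `1` are repeated. -/
noncomputable def T (ks : KnotSeq) (l : ℤ) : ℝ :=
  if l ≤ 0 then 0 else if (ks.N + 1 : ℤ) ≤ l then 1 else ks.t l.toNat

/-- The mesh size `Δ = max_{1 ≤ l ≤ N+1} (t l − t (l−1))`. -/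
noncomputable def mesh (ks : KnotSeq) : ℝ :=
  (Finset.Icc 1 (ks.N + 1)).sup' (Finset.nonempty_Icc.mpr (by omega))
    fun l => ks.t l - ks.t (l - 1)

/-- Quasi-uniformity with constant `C₀`: the mesh size is at most `C₀` times every
spacing. -/
def QuasiUniform (ks : KnotSeq) (C₀ : ℝ) : Prop :=
  ∀ l ∈ Finset.Icc 1 (ks.N + 1), ks.mesh ≤ C₀ * (ks.t l - ks.t (l - 1))

end KnotSeq

/-- The normalized B-spline `B_{j,m}` of order `m` for the extended knot sequence `T`,
defined by the Cox–de Boor recursion.  `B_{j,1}` is the indicator of `[T (j−1), T j)`,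
also including the point `1` when `T j = 1 > T (j−1)`; for orders `≥ 2` the recursion is
`B_{j,m}(x) = ((x − T(j−m))/(T(j−1) − T(j−m))) B_{j−1,m−1}(x)
  + ((T j − x)/(T j − T(j−m+1))) B_{j,m−1}(x)`,
a term with zero denominator being zero (Lean's division-by-zero convention). -/
noncomputable def Bspl (T : ℤ → ℝ) : ℕ → ℤ → ℝ → ℝ
  | 0, _, _ => 0
  | 1, j, x =>
      if T (j - 1) ≤ x ∧ (x < T j ∨ (x = 1 ∧ T j = 1 ∧ T (j - 1) < 1)) then 1 else 0
  | m + 2, j, x =>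
      (x - T (j - (m + 2))) / (T (j - 1) - T (j - (m + 2))) * Bspl T (m + 1) (j - 1) x
        + (T j - x) / (T j - T (j - (m + 1))) * Bspl T (m + 1) j x

open scoped Classical

theorem aux_bspl_supp (T : ℤ → ℝ) (hT : Monotone T) (m : ℕ) :
    ∀ j x, Bspl T (m + 1) j x ≠ 0 → T (j - ((m : ℤ) + 1)) ≤ x ∧ x ≤ T j := by
  induction m with
  | zero =>
    intro j x h
    rw [Bspl] at h
    split_ifs at h with h1
    · obtain ⟨h1, h2⟩ := h1
      refine ⟨by simpa using h1, ?_⟩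
      rcases h2 with h2 | ⟨h2, h3, _⟩
      · exact h2.le
      · rw [h2, h3]
    · exact absurd rfl h
  | succ m ih =>
    intro j x h
    rw [Bspl] at h
    by_cases hA : Bspl T (m + 1) (j - 1) x = 0
    · by_cases hB : Bspl T (m + 1) j x = 0
      · rw [hA, hB] at h; simp at h
      · obtain ⟨h1, h2⟩ := ih j x hB
        exact ⟨(hT (by push_cast; omega)).trans h1, h2⟩
    · obtain ⟨h1, h2⟩ := ih (j - 1) x hA
      exact ⟨(hT (by push_cast; omega)).trans h1, h2.trans (hT (by omega))⟩

theorem aux_bspl_nonneg (T : ℤ → ℝ) (hT : Monotone T) (m : ℕ) :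
    ∀ j x, 0 ≤ Bspl T (m + 1) j x := by
  induction m with
  | zero =>
    intro j x
    rw [Bspl]
    split_ifs <;> norm_num
  | succ m ih =>
    intro j x
    rw [Bspl]
    apply add_nonneg
    · by_cases hA : Bspl T (m + 1) (j - 1) x = 0
      · simp [hA]
      · obtain ⟨h1, h2⟩ := aux_bspl_supp T hT m (j - 1) x hA
        have e : j - 1 - ((m : ℤ) + 1) = j - (m + 2) := by ring
        rw [e] at h1
        exact mul_nonneg (div_nonneg (by linarith) (by linarith)) (ih _ _)
    · by_cases hA : Bspl T (m + 1) j x = 0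
      · simp [hA]
      · obtain ⟨h1, h2⟩ := aux_bspl_supp T hT m j x hA
        exact mul_nonneg (div_nonneg (by linarith) (by linarith)) (ih _ _)

theorem aux_bspl_sum (T : ℤ → ℝ) (hT : Monotone T) (hT1 : ∀ j, T j ≤ 1) (m : ℕ) :
    ∀ (x : ℝ) (s : Finset ℤ), ∑ j ∈ s, Bspl T (m + 1) j x ≤ 1 := by
  induction m with
  | zero =>
    intro x s
    have key : ∀ j j' : ℤ, j < j' → Bspl T 1 j x ≠ 0 → Bspl T 1 j' x ≠ 0 → False := by
      intro j j' hj h h'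
      rw [Bspl] at h h'
      split_ifs at h with h1
      · split_ifs at h' with h2
        · have h3 : T j ≤ T (j' - 1) := hT (by omega)
          have h4 := hT1 j'
          obtain ⟨a1, a2⟩ := h1
          obtain ⟨b1, b2⟩ := h2
          rcases a2 with a2 | ⟨a2, a3, a4⟩
          · linarith
          · rcases b2 with b2 | ⟨b2, b3, b4⟩ <;> linarith
        · exact h' rfl
      · exact h rfl
    have hle : ∀ j, Bspl T 1 j x ≤ 1 := by
      intro j
      rw [Bspl]
      split_ifs <;> norm_num
    by_cases hz : ∀ j ∈ s, Bspl T 1 j x = 0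
    · simp only [zero_add]
      rw [Finset.sum_eq_zero hz]; norm_num
    · push Not at hz
      obtain ⟨j, hj, hne⟩ := hz
      simp only [zero_add]
      rw [Finset.sum_eq_single_of_mem j hj]
      · exact hle j
      · intro b _ hb
        by_contra hb0
        rcases lt_or_gt_of_ne hb with h | h
        · exact key _ _ h hb0 hne
        · exact key _ _ h hne hb0
  | succ m ih =>
    intro x s
    let c : ℤ → ℝ := fun i => (x - T (i - (m + 1))) / (T i - T (i - (m + 1))) * Bspl T (m + 1) i x
    let e : ℤ → ℝ := fun i => (T i - x) / (T i - T (i - (m + 1))) * Bspl T (m + 1) i x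
    have hc : ∀ i, 0 ≤ c i := by
      intro i
      by_cases hA : Bspl T (m + 1) i x = 0
      · simp [c, hA]
      · obtain ⟨h1, h2⟩ := aux_bspl_supp T hT m i x hA
        exact mul_nonneg (div_nonneg (by linarith) (by linarith)) (aux_bspl_nonneg T hT m _ _)
    have he : ∀ i, 0 ≤ e i := by
      intro i
      by_cases hA : Bspl T (m + 1) i x = 0
      · simp [e, hA]
      · obtain ⟨h1, h2⟩ := aux_bspl_supp T hT m i x hA
        exact mul_nonneg (div_nonneg (by linarith) (by linarith)) (aux_bspl_nonneg T hT m _ _)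
    have hce : ∀ i, c i + e i ≤ Bspl T (m + 1) i x := by
      intro i
      have : c i + e i = (T i - T (i - (m + 1))) / (T i - T (i - (m + 1))) *
          Bspl T (m + 1) i x := by
        simp only [c, e]; ring
      rw [this]
      exact mul_le_of_le_one_left (aux_bspl_nonneg T hT m _ _) (div_self_le_one _)
    have hB : ∀ j, Bspl T (m + 1 + 1) j x = c (j - 1) + e j := by
      intro j
      rw [Bspl]
      have e : j - 1 - ((m : ℤ) + 1) = j - (m + 2) := by ring
      simp only [c, e]
      rfl
    let s' : Finset ℤ := s.image (fun j => j - 1)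
    have h1 : ∑ j ∈ s, c (j - 1) = ∑ i ∈ s', c i := by
      rw [Finset.sum_image]
      intro a _ b _ hab
      simpa using hab
    calc ∑ j ∈ s, Bspl T (m + 1 + 1) j x = ∑ i ∈ s', c i + ∑ i ∈ s, e i := by
          rw [← h1, ← Finset.sum_add_distrib]
          exact Finset.sum_congr rfl fun j _ => hB j
      _ ≤ ∑ i ∈ s' ∪ s, c i + ∑ i ∈ s' ∪ s, e i := by
          apply add_le_add
          · exact Finset.sum_le_sum_of_subset_of_nonneg Finset.subset_union_left
              fun i _ _ => hc i
          · exact Finset.sum_le_sum_of_subset_of_nonneg Finset.subset_union_right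
              fun i _ _ => he i
      _ ≤ ∑ i ∈ s' ∪ s, Bspl T (m + 1) i x := by
          rw [← Finset.sum_add_distrib]
          exact Finset.sum_le_sum fun i _ => hce i
      _ ≤ 1 := ih x _

theorem aux_bspl_all (T : ℤ → ℝ) (hT : Monotone T) (hT1 : ∀ j, T j ≤ 1) (q : ℕ) (hq : 1 ≤ q)
    (j : ℤ) (x : ℝ) : 0 ≤ Bspl T q j x ∧ Bspl T q j x ≤ 1 ∧
      (Bspl T q j x ≠ 0 → T (j - (q : ℤ)) ≤ x ∧ x ≤ T j) := by
  obtain ⟨m, rfl⟩ := Nat.exists_eq_add_of_le' hq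
  refine ⟨aux_bspl_nonneg T hT m j x, ?_, fun h => ?_⟩
  · simpa using aux_bspl_sum T hT hT1 m x {j}
  · have := aux_bspl_supp T hT m j x h
    push_cast
    exact this

theorem aux_T_eq (ks : KnotSeq) (l : ℤ) : ks.T l = ks.t (min l.toNat (ks.N + 1)) := by
  unfold KnotSeq.T
  split_ifs with h1 h2
  · have : l.toNat = 0 := by omega
    simp [this, ks.t0]
  · have : min l.toNat (ks.N + 1) = ks.N + 1 := by omega
    rw [this, ks.tN]
  · have : min l.toNat (ks.N + 1) = l.toNat := by omega
    rw [this]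

theorem aux_mesh (ks : KnotSeq) (l : ℕ) (hl : l < ks.N + 1) :
    ks.t (l + 1) - ks.t l ≤ ks.mesh := by
  have := Finset.le_sup' (fun l => ks.t l - ks.t (l - 1))
    (show l + 1 ∈ Finset.Icc 1 (ks.N + 1) by simp; omega)
  simp only [Nat.add_sub_cancel] at this
  exact this

theorem aux_mesh_nonneg (ks : KnotSeq) : 0 ≤ ks.mesh := by
  have h1 := aux_mesh ks 0 (by omega)
  have h2 := ks.mono 0 (by omega)
  linarith

theorem aux_T_step (ks : KnotSeq) (l : ℤ) :
    ks.T l ≤ ks.T (l + 1) ∧ ks.T (l + 1) - ks.T l ≤ ks.mesh := by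
  rw [aux_T_eq, aux_T_eq]
  by_cases h : 0 ≤ l ∧ l < ks.N + 1
  · have e1 : min l.toNat (ks.N + 1) = l.toNat := by omega
    have e2 : min (l + 1).toNat (ks.N + 1) = l.toNat + 1 := by omega
    rw [e1, e2]
    exact ⟨(ks.mono _ (by omega)).le, aux_mesh ks _ (by omega)⟩
  · have e1 : min (l + 1).toNat (ks.N + 1) = min l.toNat (ks.N + 1) := by omega
    rw [e1]
    exact ⟨le_rfl, by simpa using aux_mesh_nonneg ks⟩

theorem aux_T_mono (ks : KnotSeq) : Monotone ks.T :=
  monotone_int_of_le_succ fun l => (aux_T_step ks l).1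

theorem aux_T_le_one (ks : KnotSeq) (l : ℤ) : ks.T l ≤ 1 := by
  have h := aux_T_mono ks (le_max_left l (ks.N + 1 : ℤ))
  have e : ks.T (max l (ks.N + 1 : ℤ)) = 1 := by
    unfold KnotSeq.T
    rw [if_neg (by omega), if_pos (by omega)]
  linarith

theorem aux_T_len (ks : KnotSeq) (l : ℤ) (q : ℕ) : ks.T l - ks.T (l - q) ≤ q * ks.mesh := by
  induction q with
  | zero => simp
  | succ q ih =>
    have h := (aux_T_step ks (l - (q + 1))).2
    have e : l - ((q : ℤ) + 1) + 1 = l - q := by ring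
    rw [e] at h
    push_cast
    linarith

theorem aux_mesh_le (ks : KnotSeq) (C₀ : ℝ) (h : ks.QuasiUniform C₀) :
    ((ks.N : ℝ) + 1) * ks.mesh ≤ C₀ := by
  have h1 : ∑ l ∈ Finset.range (ks.N + 1), ks.mesh ≤
      ∑ l ∈ Finset.range (ks.N + 1), C₀ * (ks.t (l + 1) - ks.t l) := by
    apply Finset.sum_le_sum
    intro l hl
    have := h (l + 1) (by simp at hl ⊢; omega)
    simpa using this
  rw [← Finset.mul_sum, Finset.sum_range_sub, ks.tN, ks.t0] at h1
  simpa using h1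

/-- The length of the enlarged support interval. -/
theorem aux_len (ks : KnotSeq) (C₀ : ℝ) (h : ks.QuasiUniform C₀) (q : ℕ) (hq : 1 ≤ q) (l : ℤ) :
    ks.T l - (ks.T (l - q) - ((ks.N + q : ℕ) : ℝ)⁻¹) ≤
      ((q : ℝ) ^ 2 * C₀ + 1) * ((ks.N + q : ℕ) : ℝ)⁻¹ := by
  have h1 := aux_T_len ks l q
  have h2 := aux_mesh_le ks C₀ h
  have hm := aux_mesh_nonneg ks
  have hq' : (1 : ℝ) ≤ q := by exact_mod_cast hq
  have hN : (0 : ℝ) ≤ ks.N := Nat.cast_nonneg _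
  have hJ : (0 : ℝ) < ((ks.N + q : ℕ) : ℝ) := by push_cast; linarith
  have h3 : (q : ℝ) * ks.mesh ≤ (q : ℝ) ^ 2 * C₀ * ((ks.N + q : ℕ) : ℝ)⁻¹ := by
    rw [← div_eq_mul_inv, le_div_iff₀ hJ]
    push_cast
    have h4 : (ks.N : ℝ) + q ≤ q * (ks.N + 1) := by nlinarith
    calc (q : ℝ) * ks.mesh * (ks.N + q) ≤ q * ks.mesh * (q * (ks.N + 1)) := by gcongr
      _ = q ^ 2 * ((ks.N + 1) * ks.mesh) := by ring
      _ ≤ q ^ 2 * C₀ := by gcongr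
  linarith

theorem aux_Ninv (N q : ℕ) : (N : ℝ)⁻¹ ≤ ((q : ℝ) + 1) * ((N + q : ℕ) : ℝ)⁻¹ := by
  rcases Nat.eq_zero_or_pos N with rfl | hN
  · simp; positivity
  · have hN' : (1 : ℝ) ≤ N := by exact_mod_cast hN
    have hq : (0 : ℝ) ≤ q := Nat.cast_nonneg _
    rw [inv_eq_one_div, ← div_eq_mul_inv, div_le_div_iff₀ (by linarith) (by push_cast; linarith)]
    push_cast
    nlinarith

/-- The unit cube. -/
def auxI (d : ℕ) : Set (Fin d → ℝ) := Set.univ.pi fun _ : Fin d => Set.Icc (0 : ℝ) 1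

/-- The indicator of the lower orthant. -/
noncomputable def auxL {d : ℕ} (x y : Fin d → ℝ) : ℝ := if ∀ k, y k ≤ x k then 1 else 0

/-- The indicator of a half-open box. -/
noncomputable def auxB {d : ℕ} (a b y : Fin d → ℝ) : ℝ :=
  if ∀ k, a k < y k ∧ y k ≤ b k then 1 else 0

theorem auxB_eq {d : ℕ} (a b : Fin d → ℝ) (hab : ∀ k, a k ≤ b k) (y : Fin d → ℝ) :
    auxB a b y = ∑ s : Finset (Fin d), (-1) ^ s.card * auxL (fun k => if k ∈ s then a k else b k) y := by
  have h1 : auxB a b y = ∏ k, (-(if y k ≤ a k then (1 : ℝ) else 0) + (if y k ≤ b k then 1 else 0)) := by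
    have : ∀ k, (-(if y k ≤ a k then (1 : ℝ) else 0) + (if y k ≤ b k then 1 else 0)) =
        if a k < y k ∧ y k ≤ b k then 1 else 0 := by
      intro k
      have := hab k
      by_cases h1 : y k ≤ a k
      · have h2 : y k ≤ b k := h1.trans this
        have h3 : ¬ (a k < y k ∧ y k ≤ b k) := fun h => absurd h1 (not_le.mpr h.1)
        rw [if_pos h1, if_pos h2, if_neg h3]; norm_num
      · by_cases h2 : y k ≤ b k
        · rw [if_neg h1, if_pos h2, if_pos ⟨not_le.mp h1, h2⟩]; norm_num
        · rw [if_neg h1, if_neg h2, if_neg fun h => h2 h.2]; norm_num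
    simp_rw [this]
    rw [Finset.prod_ite_zero]
    simp [auxB]
  rw [h1, Finset.prod_add, Finset.powerset_univ]
  refine Finset.sum_congr rfl fun s _ => ?_
  rw [Finset.prod_neg, mul_assoc]
  congr 1
  rw [Finset.prod_ite_zero, Finset.prod_ite_zero]
  simp only [auxL, Finset.prod_const_one, mul_ite, mul_one, mul_zero]
  rw [← ite_and]
  congr 1
  apply propext
  constructor
  · rintro ⟨h1, h2⟩ k
    by_cases hk : k ∈ s
    · simpa [hk] using by first | exact h1 k hk | exact h2 k hk
    · simpa [hk] using by first | exact h1 k (by simp [hk]) | exact h2 k (by simp [hk])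
  · intro h
    constructor
    · intro k hk
      have := h k
      simp at hk
      simpa [hk] using this
    · intro k hk
      have := h k
      simpa [hk] using this

theorem auxL_meas {d : ℕ} (x : Fin d → ℝ) : MeasurableSet {y : Fin d → ℝ | ∀ k, y k ≤ x k} := by
  have : {y : Fin d → ℝ | ∀ k, y k ≤ x k} = Set.Iic x := by
    ext y; simp [Pi.le_def]
  rw [this]; exact measurableSet_Iic

theorem auxI_meas (d : ℕ) : MeasurableSet (auxI d) :=
  MeasurableSet.univ_pi fun _ => measurableSet_Icc

theorem auxI_vol (d : ℕ) : volume (auxI d) < ⊤ := by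
  rw [auxI, volume_pi_pi]
  simp

theorem aux_int {d : ℕ} (g : (Fin d → ℝ) → ℝ) (hg : Measurable g) (K : ℝ)
    (h0 : ∀ y ∈ auxI d, 0 ≤ g y) (h1 : ∀ y ∈ auxI d, g y ≤ K) : IntegrableOn g (auxI d) := by
  refine Measure.integrableOn_of_bounded (M := K) (auxI_vol d).ne hg.aestronglyMeasurable ?_
  filter_upwards [ae_restrict_mem (auxI_meas d)] with y hy
  rw [Real.norm_eq_abs, abs_of_nonneg (h0 y hy)]
  exact h1 y hy

theorem auxL_mul {d : ℕ} (g : (Fin d → ℝ) → ℝ) (x : Fin d → ℝ) :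
    (fun y => auxL x y * g y) = Set.indicator {y | ∀ k, y k ≤ x k} g := by
  ext y
  simp only [auxL, Set.indicator, Set.mem_ofPred_eq]
  split_ifs <;> simp

theorem auxL_integral {d : ℕ} (g : (Fin d → ℝ) → ℝ) (x : Fin d → ℝ) (hx : ∀ k, x k ≤ 1) :
    ∫ y in auxI d, auxL x y * g y = ∫ y in Set.univ.pi fun k => Set.Icc 0 (x k), g y := by
  rw [auxL_mul, setIntegral_indicator (auxL_meas x)]
  congr 2
  ext y
  simp only [auxI, Set.mem_inter_iff, Set.mem_univ_pi, Set.mem_Icc, Set.mem_ofPred_eq]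
  constructor
  · rintro ⟨h1, h2⟩ k
    exact ⟨(h1 k).1, h2 k⟩
  · intro h
    exact ⟨fun k => ⟨(h k).1, (h k).2.trans (hx k)⟩, fun k => (h k).2⟩

theorem aux_box_integral {d : ℕ} (g : (Fin d → ℝ) → ℝ) (K : ℝ) (hK : 0 < K)
    (h0 : ∀ y ∈ auxI d, 0 ≤ g y) (h1 : ∀ y ∈ auxI d, g y ≤ K) 
    (a b : Fin d → ℝ) (hab : ∀ k, a k ≤ b k) :
    ∫ y in auxI d, auxB a b y * g y ≤ K * ∏ k, (b k - a k) := by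
  let S : Set (Fin d → ℝ) := Set.univ.pi fun k => Set.Ioc (a k) (b k)
  have hS : MeasurableSet S := MeasurableSet.univ_pi fun _ => measurableSet_Ioc
  have hv : volume S = ∏ k, ENNReal.ofReal (b k - a k) := by
    simp only [S]; rw [volume_pi_pi]; simp
  have hvlt : volume S < ⊤ := by
    rw [hv]; exact ENNReal.prod_lt_top fun k _ => ENNReal.ofReal_lt_top
  have e : (fun y => auxB a b y * g y) = Set.indicator S g := by
    ext y
    simp only [auxB, Set.indicator, S, Set.mem_univ_pi, Set.mem_Ioc]
    split_ifs <;> simp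
  rw [e, setIntegral_indicator hS]
  have h2 : ‖∫ y in auxI d ∩ S, g y‖ ≤ K * volume.real (auxI d ∩ S) := by
    apply norm_setIntegral_le_of_norm_le_const
    · exact (measure_mono Set.inter_subset_right).trans_lt hvlt
    · intro y hy
      rw [Real.norm_eq_abs, abs_of_nonneg (h0 y hy.1)]
      exact h1 y hy.1
  have h3 : volume.real (auxI d ∩ S) ≤ volume.real S :=
    measureReal_mono Set.inter_subset_right hvlt.ne
  have h4 : volume.real S = ∏ k, (b k - a k) := by
    rw [Measure.real, hv, ENNReal.toReal_prod]
    exact Finset.prod_congr rfl fun k _ => ENNReal.toReal_ofReal (by linarith [hab k])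
  calc _ ≤ _ := Real.le_norm_self _
    _ ≤ _ := h2
    _ ≤ _ := by rw [← h4]; gcongr

/-- Box discrepancy bound. -/
theorem aux_count_s11 {d n : ℕ} (X : Fin n → Fin d → ℝ) (hX : ∀ i, X i ∈ auxI d)
    (g : (Fin d → ℝ) → ℝ) (hg : Measurable g) (K : ℝ) (hK : 0 < K)
    (h0 : ∀ y ∈ auxI d, 0 ≤ g y) (h1 : ∀ y ∈ auxI d, g y ≤ K) (ε : ℝ) (hε : 0 ≤ ε)
    (hG : ∀ x ∈ auxI d, |(n : ℝ)⁻¹ * (∑ i, auxL x (X i)) -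
      ∫ y in Set.univ.pi fun k => Set.Icc 0 (x k), g y| ≤ ε)
    (a b : Fin d → ℝ) (hab : ∀ k, a k ≤ b k) (hb : ∀ k, b k ≤ 1) :
    (n : ℝ)⁻¹ * ∑ i, auxB a b (X i) ≤ K * ∏ k, (b k - a k) + 2 ^ d * ε := by
  have hgi := aux_int g hg K h0 h1
  have hG' : ∀ x : Fin d → ℝ, (∀ k, x k ≤ 1) → |(n : ℝ)⁻¹ * (∑ i, auxL x (X i)) -
      ∫ y in auxI d, auxL x y * g y| ≤ ε := by
    intro x hx
    rw [auxL_integral g x hx]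
    by_cases hx0 : ∀ k, 0 ≤ x k
    · exact hG x (by simp only [auxI, Set.mem_univ_pi]; exact fun k => ⟨hx0 k, hx k⟩)
    · push Not at hx0
      obtain ⟨k, hk⟩ := hx0
      have e1 : (Set.univ.pi fun k => Set.Icc 0 (x k)) = (∅ : Set (Fin d → ℝ)) := by
        rw [Set.univ_pi_eq_empty_iff]
        exact ⟨k, Set.Icc_eq_empty (by linarith)⟩
      have e2 : ∀ i, auxL x (X i) = 0 := by
        intro i
        rw [auxL, if_neg]
        intro h
        have h5 := h k
        have h6 := (Set.mem_univ_pi.mp (hX i) k).1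
        linarith
      rw [e1]
      simp [e2, hε]
  let xs : Finset (Fin d) → Fin d → ℝ := fun s k => if k ∈ s then a k else b k
  have hxs : ∀ s k, xs s k ≤ 1 := by
    intro s k
    simp only [xs]
    split_ifs
    · exact (hab k).trans (hb k)
    · exact hb k
  have hint : ∀ s, IntegrableOn (fun y => auxL (xs s) y * g y) (auxI d) := by
    intro s
    rw [auxL_mul]
    exact hgi.indicator (auxL_meas _)
  have e1 : (n : ℝ)⁻¹ * ∑ i, auxB a b (X i) =
      ∑ s : Finset (Fin d), (-1) ^ s.card * ((n : ℝ)⁻¹ * ∑ i, auxL (xs s) (X i)) := by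
    simp_rw [auxB_eq a b hab]
    rw [Finset.sum_comm, Finset.mul_sum]
    refine Finset.sum_congr rfl fun s _ => ?_
    rw [← Finset.mul_sum]
    ring
  have e2 : ∫ y in auxI d, auxB a b y * g y =
      ∑ s : Finset (Fin d), (-1) ^ s.card * ∫ y in auxI d, auxL (xs s) y * g y := by
    simp_rw [auxB_eq a b hab, Finset.sum_mul, mul_assoc]
    rw [integral_finsetSum]
    · exact Finset.sum_congr rfl fun s _ => integral_const_mul _ _
    · intro s _
      exact (hint s).const_mul _
  have h5 : |(n : ℝ)⁻¹ * ∑ i, auxB a b (X i) - ∫ y in auxI d, auxB a b y * g y| ≤ 2 ^ d * ε := by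
    rw [e1, e2, ← Finset.sum_sub_distrib]
    refine (Finset.abs_sum_le_sum_abs _ _).trans ?_
    calc _ ≤ ∑ s : Finset (Fin d), ε := by
          refine Finset.sum_le_sum fun s _ => ?_
          rw [← mul_sub, abs_mul, abs_pow, abs_neg, abs_one, one_pow, one_mul]
          exact hG' _ (hxs s)
      _ = 2 ^ d * ε := by simp
  have h6 := aux_box_integral g K hK h0 h1 a b hab
  have h7 := (abs_le.mp h5).2
  linarith

/-- There is a constant `C > 0` depending only on `q`, `d`, the
quasi-uniformity constant `C₀` and `K_max` such that: for quasi-uniform knot sequences,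
a distribution function `G` on `[0,1]^d` with density `g ≤ K_max`, and design points
whose empirical distribution `G_n` satisfies `sup_x |G_n(x) − G(x)| ≤ Π_k N_k⁻¹`, one has
`Σ_i Π_k B_{j_k,q_k}(X_{ik})^{p_k} ≤ C n Π_k J_k⁻¹` for every multi-index `j` and
`p ∈ ℕ^d`. -/
theorem statement11 (d : ℕ) (hd : 1 ≤ d) (q : Fin d → ℕ) (hq : ∀ k, 1 ≤ q k)
    (C₀ Kmax : ℝ) (hC₀ : 1 ≤ C₀) (hK : 0 < Kmax) :
    ∃ C > (0 : ℝ), ∀ (ks : Fin d → KnotSeq), (∀ k, (ks k).QuasiUniform C₀) →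
      ∀ (n : ℕ) (X : Fin n → Fin d → ℝ), (∀ i k, X i k ∈ Set.Icc (0 : ℝ) 1) →
      ∀ g : (Fin d → ℝ) → ℝ, Measurable g →
        (∀ y ∈ Set.univ.pi fun _ : Fin d => Set.Icc (0 : ℝ) 1, 0 ≤ g y) →
        (∀ y ∈ Set.univ.pi fun _ : Fin d => Set.Icc (0 : ℝ) 1, g y ≤ Kmax) →
        (∫ y in Set.univ.pi fun _ : Fin d => Set.Icc (0 : ℝ) 1, g y) = 1 →
        (∀ x ∈ Set.univ.pi fun _ : Fin d => Set.Icc (0 : ℝ) 1,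
          |(n : ℝ)⁻¹ * (∑ i, if ∀ k, X i k ≤ x k then (1 : ℝ) else 0) -
              ∫ y in Set.univ.pi fun k => Set.Icc 0 (x k), g y| ≤
            ∏ k, ((ks k).N : ℝ)⁻¹) →
        ∀ (j : (k : Fin d) → Fin ((ks k).N + q k)) (p : Fin d → ℕ), (∀ k, 1 ≤ p k) →
          ∑ i, ∏ k, Bspl (ks k).T (q k) (((j k : ℕ) : ℤ) + 1) (X i k) ^ p k ≤
            C * n * ∏ k, (((ks k).N + q k : ℕ) : ℝ)⁻¹ := by
  have hC : (0 : ℝ) < Kmax * ∏ k, ((q k : ℝ) ^ 2 * C₀ + 1) + 2 ^ d * ∏ k, ((q k : ℝ) + 1) := by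
    have : 0 < C₀ := by linarith
    positivity
  refine ⟨_, hC, ?_⟩
  intro ks hks n X hX g hg h0 h1 _ hG j p hp
  rcases Nat.eq_zero_or_pos n with rfl | hn
  · simp
  have hJ : ∀ k, (0 : ℝ) < ((ks k).N + q k : ℕ) := fun k => by
    have := hq k
    exact_mod_cast (by omega : 0 < (ks k).N + q k)
  let b : Fin d → ℝ := fun k => (ks k).T (((j k : ℕ) : ℤ) + 1)
  let a : Fin d → ℝ := fun k =>
    (ks k).T (((j k : ℕ) : ℤ) + 1 - (q k : ℕ)) - (((ks k).N + q k : ℕ) : ℝ)⁻¹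
  have hab : ∀ k, a k ≤ b k := fun k => by
    have h2 := aux_T_mono (ks k) (show ((j k : ℕ) : ℤ) + 1 - (q k : ℕ) ≤ ((j k : ℕ) : ℤ) + 1 by omega)
    have h3 := inv_pos.mpr (hJ k)
    simp only [a, b]
    linarith
  have hcount := aux_count_s11 X (fun i => Set.mem_univ_pi.mpr fun k => hX i k) g hg Kmax hK h0 h1
    (∏ k, ((ks k).N : ℝ)⁻¹) (by positivity) hG a b hab (fun k => aux_T_le_one _ _)
  have hvol : ∏ k, (b k - a k) ≤ (∏ k, ((q k : ℝ) ^ 2 * C₀ + 1)) *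
      ∏ k, (((ks k).N + q k : ℕ) : ℝ)⁻¹ := by
    rw [← Finset.prod_mul_distrib]
    exact Finset.prod_le_prod (fun k _ => by linarith [hab k])
      fun k _ => aux_len (ks k) C₀ (hks k) (q k) (hq k) _
  have hNN : ∏ k, ((ks k).N : ℝ)⁻¹ ≤ (∏ k, ((q k : ℝ) + 1)) *
      ∏ k, (((ks k).N + q k : ℕ) : ℝ)⁻¹ := by
    rw [← Finset.prod_mul_distrib]
    exact Finset.prod_le_prod (fun k _ => by positivity) fun k _ => aux_Ninv _ _
  have hterm : ∀ i, ∏ k, Bspl (ks k).T (q k) (((j k : ℕ) : ℤ) + 1) (X i k) ^ p k ≤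
      auxB a b (X i) := by
    intro i
    have hall := fun k => aux_bspl_all (ks k).T (aux_T_mono (ks k)) (aux_T_le_one (ks k)) (q k)
      (hq k) (((j k : ℕ) : ℤ) + 1) (X i k)
    have hnn := fun k => (hall k).1
    have hle := fun k => (hall k).2.1
    unfold auxB
    split_ifs with hbox
    · exact Finset.prod_le_one (fun k _ => pow_nonneg (hnn k) _)
        fun k _ => pow_le_one₀ (hnn k) (hle k)
    · push Not at hbox
      obtain ⟨k, hk⟩ := hbox
      apply le_of_eq
      apply Finset.prod_eq_zero (Finset.mem_univ k)
      have : Bspl (ks k).T (q k) (((j k : ℕ) : ℤ) + 1) (X i k) = 0 := by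
        by_contra hne
        obtain ⟨h2, h3⟩ := (hall k).2.2 hne
        have h4 := inv_pos.mpr (hJ k)
        have h6 : a k < X i k := by simp only [a]; linarith
        have h7 := hk h6
        simp only [b] at h7
        linarith
      rw [this]
      exact zero_pow (by have := hp k; omega)
  have hn' : (0 : ℝ) < n := by exact_mod_cast hn
  rw [← div_eq_inv_mul, div_le_iff₀ hn'] at hcount
  calc _ ≤ ∑ i, auxB a b (X i) := Finset.sum_le_sum fun i _ => hterm i
    _ ≤ _ := hcount
    _ ≤ (Kmax * ((∏ k, ((q k : ℝ) ^ 2 * C₀ + 1)) * ∏ k, (((ks k).N + q k : ℕ) : ℝ)⁻¹) +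
        2 ^ d * ((∏ k, ((q k : ℝ) + 1)) * ∏ k, (((ks k).N + q k : ℕ) : ℝ)⁻¹)) * n := by gcongr
    _ = _ := by ring
end

section
/- Fix orders m = (m_1,…,m_d) with m_k ≥ 2 and, in each direction k, a knot sequence with N_k interior knots that is quasi-uniform with constant C₀, giving J_k' = N_k + m_k B-splines B_{j_k,m_k} of order m_k. There is a constant C > 0 depending only on m, d and C₀ such that for all x, y ∈ [0,1]^d: Σ_j |∏_{k=1}^d B_{j_k,m_k}(x_k) − ∏_{k=1}^d B_{j_k,m_k}(y_k)|² ≤ C (Σ_{k=1}^d J_k'²) ‖x − y‖², where the sum over j runs over all multi-indices 1 ≤ j_k ≤ J_k' and ‖·‖ is the Euclidean norm on ℝ^d. -/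
open MeasureTheory

namespace BsplAux

/-- abstract properties of the extended knots -/
structure Good (T : ℤ → ℝ) (δ : ℝ) : Prop where
  pos : 0 < δ
  mono : Monotone T
  gap : ∀ a b, a ≤ b → T a = T b ∨ T a + δ ≤ T b
  nonneg : ∀ a, 0 ≤ T a
  le_one : ∀ a, T a ≤ 1
  deg : ∀ i, T (i - 1) = T i → T i = 0 ∨ T i = 1

lemma supp {T : ℤ → ℝ} (hT : Monotone T) (m : ℕ) : ∀ (j : ℤ) (x : ℝ), Bspl T m j x ≠ 0 →
    T (j - m) ≤ x ∧ x ≤ T j := by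
  induction m with
  | zero => intro j x h; simp [Bspl] at h
  | succ n ih =>
    intro j x h
    cases n with
    | zero =>
      rw [Bspl] at h
      split_ifs at h with hc
      · refine ⟨by simpa using hc.1, ?_⟩
        rcases hc.2 with h1 | ⟨h1, h2, _⟩
        · exact h1.le
        · rw [h1, h2]
      · exact absurd rfl h
    | succ n =>
      rw [Bspl] at h
      by_cases h1 : Bspl T (n + 1) (j - 1) x = 0
      · by_cases h2 : Bspl T (n + 1) j x = 0
        · simp [h1, h2] at h
        · obtain ⟨p, q⟩ := ih _ _ h2
          exact ⟨(hT (by push_cast; linarith)).trans p, q⟩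
      · obtain ⟨p, q⟩ := ih _ _ h1
        refine ⟨(hT (by push_cast; linarith)).trans p, q.trans (hT (by linarith))⟩

lemma uniq {T : ℤ → ℝ} {δ : ℝ} (hT : Good T δ) (x : ℝ) (j j' : ℤ) (h : Bspl T 1 j x ≠ 0)
    (h' : Bspl T 1 j' x ≠ 0) : j' ≤ j := by
  by_contra! hlt
  rw [Bspl] at h h'
  split_ifs at h with hc
  · split_ifs at h' with hc'
    · have h1 : T j ≤ T (j' - 1) := hT.mono (by linarith)
      have h2 := hT.le_one j'
      rcases hc.2 with a | ⟨a, b, c⟩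
      · linarith [hc'.1]
      · rcases hc'.2 with e | ⟨e, f, g⟩ <;> linarith
    · exact h' rfl
  · exact h rfl

lemma window {T : ℤ → ℝ} {δ : ℝ} (hT : Good T δ) (x : ℝ) :
    ∃ i : ℤ, ∀ (m : ℕ) (j : ℤ), Bspl T m j x ≠ 0 → i ≤ j ∧ j < i + m := by
  obtain ⟨i, hi⟩ : ∃ i : ℤ, ∀ j, Bspl T 1 j x ≠ 0 → j = i := by
    by_cases h : ∃ i, Bspl T 1 i x ≠ 0
    · obtain ⟨i, hi⟩ := h
      exact ⟨i, fun j hj => le_antisymm (uniq hT x _ _ hi hj) (uniq hT x _ _ hj hi)⟩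
    · push Not at h
      exact ⟨0, fun j hj => absurd (h j) hj⟩
  refine ⟨i, fun m => ?_⟩
  induction m with
  | zero => intro j h; simp [Bspl] at h
  | succ n ih =>
    intro j h
    cases n with
    | zero => have := hi j h; subst this; simp
    | succ n =>
      rw [Bspl] at h
      by_cases h1 : Bspl T (n + 1) (j - 1) x = 0
      · by_cases h2 : Bspl T (n + 1) j x = 0
        · simp [h1, h2] at h
        · have := ih _ h2
          push_cast at this ⊢
          constructor <;> linarith
      · have := ih _ h1
        push_cast at this ⊢
        constructor <;> linarith

lemma ratio1 {a b x : ℝ} (h1 : a ≤ x) (h2 : x ≤ b) :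
    0 ≤ (x - a) / (b - a) ∧ (x - a) / (b - a) ≤ 1 :=
  ⟨div_nonneg (by linarith) (by linarith), div_le_one_of_le₀ (by linarith) (by linarith)⟩

lemma ratio2 {a b x : ℝ} (h1 : a ≤ x) (h2 : x ≤ b) :
    0 ≤ (b - x) / (b - a) ∧ (b - x) / (b - a) ≤ 1 :=
  ⟨div_nonneg (by linarith) (by linarith), div_le_one_of_le₀ (by linarith) (by linarith)⟩

lemma mul_bd {r B M : ℝ} (h : B ≠ 0 → 0 ≤ r ∧ r ≤ 1) (hB : |B| ≤ M) : |r * B| ≤ M := by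
  by_cases h0 : B = 0
  · subst h0; simpa using hB
  · obtain ⟨p, q⟩ := h h0
    rw [abs_mul, abs_of_nonneg p]
    nlinarith [abs_nonneg B]

lemma mul_lip {r s B B' M ε η : ℝ} (h : B ≠ 0 → 0 ≤ r ∧ r ≤ 1) (h' : B' ≠ 0 → 0 ≤ s ∧ s ≤ 1)
    (hε : |r - s| ≤ ε) (hB' : |B'| ≤ M) (hη : |B - B'| ≤ η) :
    |r * B - s * B'| ≤ M * ε + η := by
  have hM : 0 ≤ M := (abs_nonneg _).trans hB'
  have hε0 : 0 ≤ ε := (abs_nonneg _).trans hε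
  by_cases h0 : B = 0
  · subst h0
    have := mul_bd h' (M := η) (by simpa using hη)
    simp only [mul_zero, zero_sub, abs_neg]
    nlinarith [mul_nonneg hM hε0]
  · obtain ⟨p, q⟩ := h h0
    have e : r * B - s * B' = r * (B - B') + (r - s) * B' := by ring
    rw [e]
    refine (abs_add_le _ _).trans ?_
    have h1 := mul_bd (r := r) (B := B - B') (fun _ => ⟨p, q⟩) hη
    have h2 : |(r - s) * B'| ≤ M * ε := by
      rw [abs_mul, mul_comm]
      exact mul_le_mul hB' hε (abs_nonneg _) hM
    linarith

lemma bd {T : ℤ → ℝ} {δ : ℝ} (hT : Good T δ) (m : ℕ) : ∀ (j : ℤ) (x : ℝ),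
    |Bspl T m j x| ≤ 2 ^ m := by
  induction m with
  | zero => intro j x; simp [Bspl]
  | succ n ih =>
    intro j x
    cases n with
    | zero =>
      rw [Bspl]
      split_ifs <;> norm_num
    | succ n =>
      rw [Bspl]
      refine (abs_add_le _ _).trans ?_
      have h1 := mul_bd (r := (x - T (j - (n + 2))) / (T (j - 1) - T (j - (n + 2)))) (fun h => by
        obtain ⟨p, q⟩ := supp hT.mono _ _ _ h
        refine ratio1 ?_ q
        convert p using 2; push_cast; ring) (ih (j - 1) x)
      have h2 := mul_bd (r := (T j - x) / (T j - T (j - (n + 1)))) (fun h => by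
        obtain ⟨p, q⟩ := supp hT.mono _ _ _ h
        refine ratio2 ?_ q
        convert p using 2; push_cast; ring) (ih j x)
      rw [pow_succ (2 : ℝ) (n + 1)]
      linarith

lemma div_lip {a b δ u v : ℝ} (hδ : 0 < δ) (h : a = b ∨ a + δ ≤ b) :
    |u / (b - a) - v / (b - a)| ≤ |u - v| / δ := by
  rw [← sub_div, abs_div]
  rcases h with h | h
  · subst h; simp; positivity
  · rw [abs_of_pos (by linarith : 0 < b - a)]
    gcongr
    linarith

noncomputable def cc (T : ℤ → ℝ) (i : ℤ) (x : ℝ) : ℝ :=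
  if T (i - 1) = T i then (if T i = 0 then 1 else 0)
  else max 0 (min 1 ((x - T (i - 1)) / (T i - T (i - 1))))

lemma cc_lip {T : ℤ → ℝ} {δ : ℝ} (hT : Good T δ) (i : ℤ) (x y : ℝ) :
    |cc T i x - cc T i y| ≤ |x - y| / δ := by
  have := hT.pos
  unfold cc
  split_ifs with h h0
  · simp; positivity
  · simp; positivity
  · refine (abs_max_sub_max_le_max _ _ _ _).trans ?_
    refine max_le (by simp; positivity) ?_
    refine (abs_min_sub_min_le_max _ _ _ _).trans ?_
    refine max_le (by simp; positivity) ?_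
    refine (div_lip hT.pos (hT.gap _ _ (by linarith))).trans ?_
    simp

lemma cc_one {T : ℤ → ℝ} {δ : ℝ} (hT : Good T δ) (i : ℤ) (x : ℝ) (h : T i ≤ x) (h1 : T i < 1) :
    cc T i x = 1 := by
  have hm : T (i - 1) ≤ T i := hT.mono (by linarith)
  unfold cc
  split_ifs with ha hb
  · rfl
  · rcases hT.deg i ha with h2 | h2
    · exact absurd h2 hb
    · linarith
  · have hlt := lt_of_le_of_ne hm ha
    have : 1 ≤ (x - T (i - 1)) / (T i - T (i - 1)) := by
      rw [le_div_iff₀ (by linarith)]; linarith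
    rw [min_eq_left this]; norm_num

lemma cc_zero {T : ℤ → ℝ} {δ : ℝ} (hT : Good T δ) (i : ℤ) (x : ℝ) (h : x ≤ T (i - 1))
    (h1 : 0 < T i) : cc T i x = 0 := by
  have hm : T (i - 1) ≤ T i := hT.mono (by linarith)
  unfold cc
  split_ifs with ha hb
  · linarith
  · rfl
  · have : (x - T (i - 1)) / (T i - T (i - 1)) ≤ 0 :=
      div_nonpos_of_nonpos_of_nonneg (by linarith) (by linarith)
    exact max_eq_left ((min_le_right _ _).trans this)

lemma cc_mid {T : ℤ → ℝ} (i : ℤ) (x : ℝ) (h : T (i - 1) ≤ x) (h' : x ≤ T i)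
    (hlt : T (i - 1) < T i) : cc T i x = (x - T (i - 1)) / (T i - T (i - 1)) := by
  unfold cc
  rw [if_neg hlt.ne]
  obtain ⟨p, q⟩ := ratio1 h h'
  rw [min_eq_right q, max_eq_right p]

lemma two_eq {T : ℤ → ℝ} {δ : ℝ} (hT : Good T δ) (j : ℤ) (x : ℝ) (hx0 : 0 ≤ x) (hx1 : x ≤ 1) :
    Bspl T 2 j x = cc T (j - 1) x - cc T j x := by
  have hm1 : T (j - 2) ≤ T (j - 1) := hT.mono (by linarith)
  have hm2 : T (j - 1) ≤ T j := hT.mono (by linarith)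
  have e2 : j - 1 - 1 = j - 2 := by ring
  have l1 := hT.le_one j
  have l0 := hT.nonneg (j - 2)
  have C1 := cc_one hT (j - 1) x
  have C1' := cc_one hT j x
  have C0 := cc_zero hT (j - 1) x
  have C0' := cc_zero hT j x
  have D := cc_mid (T := T) (j - 1) x
  have D' := cc_mid (T := T) j x
  rw [e2] at C0 D
  have E : Bspl T 2 j x = (x - T (j - 2)) / (T (j - 1) - T (j - 2)) * Bspl T 1 (j - 1) x
        + (T j - x) / (T j - T (j - 1)) * Bspl T 1 j x := by
    simp [Bspl]
  rw [E]
  simp only [Bspl, e2]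
  rcases lt_or_ge x (T (j - 2)) with a | a
  · rw [if_neg (by intro h; linarith [h.1]), if_neg (by intro h; linarith [h.1]),
      C0 a.le (by linarith), C0' (by linarith) (by linarith)]
    simp
  rcases lt_or_ge x (T (j - 1)) with b | b
  · rw [if_pos ⟨a, Or.inl b⟩, if_neg (by intro h; linarith [h.1]), D a b.le (by linarith),
      C0' b.le (by linarith)]
    simp
  rcases lt_or_ge x (T j) with c | c
  · rw [if_neg (by rintro ⟨h, h1 | ⟨h1, h2, h3⟩⟩ <;> linarith), if_pos ⟨b, Or.inl c⟩,
      C1 b (by linarith), D' b c.le (by linarith)]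
    have : T j - T (j - 1) ≠ 0 := by linarith
    field_simp
    ring
  · rcases lt_or_ge (T j) 1 with d | d
    · rw [if_neg (by rintro ⟨h, h1 | ⟨h1, h2, h3⟩⟩ <;> linarith),
        if_neg (by rintro ⟨h, h1 | ⟨h1, h2, h3⟩⟩ <;> linarith), C1 b (by linarith), C1' c d]
      simp
    · have hx : x = 1 := by linarith
      have hj : T j = 1 := by linarith
      rcases lt_or_ge (T (j - 1)) 1 with e | e
      · rw [if_neg (by rintro ⟨h, h1 | ⟨h1, h2, h3⟩⟩ <;> linarith), C1 b e,
          D' b (by linarith) (by linarith), hx, hj]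
        have : (1 - T (j - 1)) ≠ 0 := by linarith
        simp [this]
      · have hj1 : T (j - 1) = 1 := by linarith
        rw [C0' (by linarith) (by linarith)]
        rcases lt_or_ge (T (j - 2)) 1 with f | f
        · rw [if_pos ⟨a, Or.inr ⟨hx, hj1, f⟩⟩, D a (by linarith) (by linarith), hx, hj]
          simp
        · rw [C0 (by linarith) (by linarith), if_neg (by rintro ⟨h, h1 | ⟨h1, h2, h3⟩⟩ <;> linarith),
            if_neg (by rintro ⟨h, h1 | ⟨h1, h2, h3⟩⟩ <;> linarith)]
          simp

lemma bspl_succ (T : ℤ → ℝ) (n : ℕ) (j : ℤ) (z : ℝ) : Bspl T (n + 2) j z =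
    (z - T (j - ((n : ℤ) + 2))) / (T (j - 1) - T (j - ((n : ℤ) + 2))) * Bspl T (n + 1) (j - 1) z
      + (T j - z) / (T j - T (j - ((n : ℤ) + 1))) * Bspl T (n + 1) j z := by
  rw [Bspl]

lemma lip {T : ℤ → ℝ} {δ : ℝ} (hT : Good T δ) (x y : ℝ) (hx : x ∈ Set.Icc (0 : ℝ) 1)
    (hy : y ∈ Set.Icc (0 : ℝ) 1) (n : ℕ) : ∀ j : ℤ,
    |Bspl T (n + 2) j x - Bspl T (n + 2) j y| ≤ 4 ^ (n + 2) * (|x - y| / δ) := by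
  have hp := hT.pos
  have hnn : 0 ≤ |x - y| / δ := by positivity
  induction n with
  | zero =>
    intro j
    simp only [zero_add]
    rw [two_eq hT j x hx.1 hx.2, two_eq hT j y hy.1 hy.2]
    have h1 := abs_le.1 (cc_lip hT (j - 1) x y)
    have h2 := abs_le.1 (cc_lip hT j x y)
    rw [abs_le]
    constructor <;> linarith [h1.1, h1.2, h2.1, h2.2]
  | succ n ih =>
    intro j
    rw [bspl_succ T (n + 1) j x, bspl_succ T (n + 1) j y]
    have s : ∀ (i : ℤ) (z : ℝ), Bspl T (n + 1 + 1) i z ≠ 0 →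
      T (i - (((n + 1 : ℕ) : ℤ) + 1)) ≤ z ∧ z ≤ T i := fun i z h => by
        obtain ⟨p, q⟩ := supp hT.mono _ _ _ h
        refine ⟨?_, q⟩
        convert p using 2; push_cast; ring
    have e : j - (((n + 1 : ℕ) : ℤ) + 2) = j - 1 - (((n + 1 : ℕ) : ℤ) + 1) := by ring
    rw [e]
    have h1 := mul_lip (fun h => ratio1 (s (j - 1) x h).1 (s (j - 1) x h).2)
      (fun h => ratio1 (s (j - 1) y h).1 (s (j - 1) y h).2)
      (div_lip hp (hT.gap _ _ (by push_cast; linarith))) (bd hT _ _ _) (ih (j - 1))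
    have h2 := mul_lip (fun h => ratio2 (s j x h).1 (s j x h).2)
      (fun h => ratio2 (s j y h).1 (s j y h).2)
      (div_lip hp (hT.gap _ _ (by push_cast; linarith))) (bd hT _ _ _) (ih j)
    have e1 : ∀ a : ℝ, |x - a - (y - a)| = |x - y| := fun a => by congr 1; ring
    have e2 : ∀ a : ℝ, |a - x - (a - y)| = |x - y| := fun a => by
      rw [abs_sub_comm x y]; congr 1; ring
    rw [e1] at h1
    rw [e2] at h2
    rw [show ∀ a b c d : ℝ, a + b - (c + d) = (a - c) + (b - d) from fun a b c d => by ring]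
    refine (abs_add_le _ _).trans ((add_le_add h1 h2).trans ?_)
    have h4 : (2 : ℝ) ^ (n + 2) ≤ 4 ^ (n + 2) := by gcongr; norm_num
    have := mul_le_mul_of_nonneg_right h4 hnn
    rw [show n + 1 + 2 = (n + 2) + 1 from rfl, pow_succ (4 : ℝ) (n + 2)]
    rw [show n + 1 + 1 = n + 2 from rfl]
    linarith

lemma mesh_ge (ks : KnotSeq) : 1 ≤ ks.mesh * (ks.N + 1) := by
  have h : ∀ l ∈ Finset.range (ks.N + 1), ks.t (l + 1) - ks.t l ≤ ks.mesh := fun l hl => by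
    have := Finset.mem_range.1 hl
    have h := Finset.le_sup' (fun l => ks.t l - ks.t (l - 1))
      (show l + 1 ∈ Finset.Icc 1 (ks.N + 1) from Finset.mem_Icc.2 ⟨by omega, by omega⟩)
    exact h
  have h2 := Finset.sum_le_sum h
  rw [Finset.sum_range_sub, ks.tN, ks.t0] at h2
  simp at h2
  linarith

lemma good (ks : KnotSeq) (C₀ : ℝ) (hC₀ : 1 ≤ C₀) (h : ks.QuasiUniform C₀) :
    Good ks.T (ks.mesh / C₀) := by
  have hpos : 0 < ks.mesh := by
    have := mesh_ge ks
    by_contra! hc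
    have : ks.mesh * (ks.N + 1) ≤ 0 := mul_nonpos_of_nonpos_of_nonneg hc (by positivity)
    linarith
  have hd : 0 < ks.mesh / C₀ := by positivity
  have step : ∀ i : ℤ, 0 ≤ i → i ≤ ks.N → ks.T i + ks.mesh / C₀ ≤ ks.T (i + 1) := by
    intro i h0 h1
    lift i to ℕ using h0
    have h1 : i ≤ ks.N := by exact_mod_cast h1
    have A : ∀ l : ℕ, l ≤ ks.N + 1 → ks.T l = ks.t l := by
      intro l hl
      unfold KnotSeq.T
      split_ifs with ha hb
      · have : l = 0 := by omega
        rw [this, ks.t0]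
      · have : l = ks.N + 1 := by omega
        rw [this, ks.tN]
      · simp
    have B := A (i + 1) (by omega)
    push_cast at B
    rw [A i (by omega), B]
    have := h (i + 1) (Finset.mem_Icc.2 ⟨by omega, by omega⟩)
    simp only [Nat.add_sub_cancel] at this
    have : ks.mesh / C₀ ≤ ks.t (i + 1) - ks.t i := by
      rw [div_le_iff₀ (by linarith)]; linarith
    linarith
  have low : ∀ i : ℤ, i ≤ 0 → ks.T i = 0 := fun i hi => by simp [KnotSeq.T, hi]
  have high : ∀ i : ℤ, ks.N + 1 ≤ i → ks.T i = 1 := fun i hi => by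
    unfold KnotSeq.T
    rw [if_neg (by omega), if_pos hi]
  have mono : Monotone ks.T := by
    refine monotone_int_of_le_succ fun i => ?_
    rcases lt_or_ge i 0 with a | a
    · rw [low i a.le, low (i + 1) (by omega)]
    · rcases le_or_gt i ks.N with b | b
      · linarith [step i a b]
      · rw [high i (by omega), high (i + 1) (by omega)]
  have nn : ∀ i, 0 ≤ ks.T i := fun i => by
    rw [← low (min i 0) (by omega)]
    exact mono (by omega)
  have lo : ∀ i, ks.T i ≤ 1 := fun i => by
    rw [← high (max i (ks.N + 1)) (by omega)]
    exact mono (by omega)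
  refine ⟨hd, mono, ?_, nn, lo, ?_⟩
  · intro a b hab
    rcases le_or_gt b 0 with hb | hb
    · left; rw [low b hb, low a (by omega)]
    rcases lt_or_ge (ks.N : ℤ) a with ha | ha
    · left; rw [high b (by omega), high a (by omega)]
    rcases hab.eq_or_lt with e | e
    · left; rw [e]
    right
    rcases le_or_gt a 0 with h0 | h0
    · have := step 0 le_rfl (by omega)
      rw [low a h0]
      rw [low 0 le_rfl] at this
      exact this.trans (mono (by omega))
    · exact (step a h0.le ha).trans (mono (by omega))
  · intro i hi
    rcases le_or_gt i 0 with hb | hb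
    · left; exact low i hb
    rcases lt_or_ge (ks.N : ℤ) (i - 1) with ha | ha
    · right; exact high i (by omega)
    have := step (i - 1) (by omega) ha
    rw [sub_add_cancel] at this
    linarith

lemma prod_diff {ι : Type*} [DecidableEq ι] (a b : ι → ℝ) (M : ℝ) (hM : 1 ≤ M)
    (ha : ∀ k, |a k| ≤ M) (hb : ∀ k, |b k| ≤ M) (s : Finset ι) :
    |∏ k ∈ s, a k - ∏ k ∈ s, b k| ≤ M ^ s.card * ∑ k ∈ s, |a k - b k| := by
  induction s using Finset.induction_on with
  | empty => simp
  | insert i s hi ih =>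
    rw [Finset.prod_insert hi, Finset.prod_insert hi, Finset.sum_insert hi,
      Finset.card_insert_of_notMem hi]
    have e : a i * ∏ k ∈ s, a k - b i * ∏ k ∈ s, b k
      = (a i - b i) * ∏ k ∈ s, a k + b i * (∏ k ∈ s, a k - ∏ k ∈ s, b k) := by ring
    rw [e]
    refine (abs_add_le _ _).trans ?_
    rw [abs_mul, abs_mul]
    have h1 : |∏ k ∈ s, a k| ≤ M ^ s.card := by
      rw [Finset.abs_prod]
      refine (Finset.prod_le_prod (fun k _ => abs_nonneg _) (fun k _ => ha k)).trans ?_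
      simp
    have h2 : (M : ℝ) ^ s.card ≤ M ^ (s.card + 1) := pow_le_pow_right₀ hM (by omega)
    have h3 : |a i - b i| * |∏ k ∈ s, a k| ≤ M ^ (s.card + 1) * |a i - b i| := by
      rw [mul_comm]
      exact mul_le_mul_of_nonneg_right (h1.trans h2) (abs_nonneg _)
    have h4 : |b i| * |∏ k ∈ s, a k - ∏ k ∈ s, b k| ≤
        M * (M ^ s.card * ∑ k ∈ s, |a k - b k|) :=
      mul_le_mul (hb i) ih (abs_nonneg _) (by linarith)
    rw [mul_add]
    refine add_le_add h3 (h4.trans (le_of_eq ?_))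
    rw [pow_succ]; ring

lemma card_supp {T : ℤ → ℝ} {δ : ℝ} (hT : Good T δ) (m J : ℕ) (x : ℝ) :
    (Finset.univ.filter fun j : Fin J => Bspl T m (((j : ℕ) : ℤ) + 1) x ≠ 0).card ≤ m := by
  obtain ⟨i, hi⟩ := window hT x
  have : (Finset.Ico i (i + m)).card = m := by simp
  conv_rhs => rw [← this]
  refine Finset.card_le_card_of_injOn (fun j : Fin J => ((j : ℕ) : ℤ) + 1) ?_ ?_
  · intro j hj
    have hj' := (Finset.mem_filter.1 (Finset.mem_coe.1 hj)).2
    exact Finset.mem_coe.2 (Finset.mem_Ico.2 (hi m _ hj'))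
  · intro a _ b _ hab
    simp only at hab
    exact Fin.ext (by omega)

end BsplAux

open BsplAux

/-- For orders `m_k ≥ 2` and quasi-uniform knot sequences (constant
`C₀`) there is a constant `C > 0` depending only on `m`, `d` and `C₀` such that for all
`x, y ∈ [0,1]^d`:
`Σ_j |Π_k B_{j_k,m_k}(x_k) − Π_k B_{j_k,m_k}(y_k)|² ≤ C (Σ_k J_k'²) ‖x − y‖²`. -/
theorem statement12 (d : ℕ) (hd : 1 ≤ d) (m : Fin d → ℕ) (hm : ∀ k, 2 ≤ m k)
    (C₀ : ℝ) (hC₀ : 1 ≤ C₀) :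
    ∃ C > (0 : ℝ), ∀ (ks : Fin d → KnotSeq), (∀ k, (ks k).QuasiUniform C₀) →
      ∀ x y : Fin d → ℝ, (∀ k, x k ∈ Set.Icc (0 : ℝ) 1) → (∀ k, y k ∈ Set.Icc (0 : ℝ) 1) →
        ∑ j : (k : Fin d) → Fin ((ks k).N + m k),
            (∏ k, Bspl (ks k).T (m k) (((j k : ℕ) : ℤ) + 1) (x k) -
              ∏ k, Bspl (ks k).T (m k) (((j k : ℕ) : ℤ) + 1) (y k)) ^ 2 ≤
          C * (∑ k, (((ks k).N + m k : ℕ) : ℝ) ^ 2) * ∑ k, (x k - y k) ^ 2 := by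
  classical
  set P : ℝ := 2 ^ (∑ k, m k) with hP
  set A : ℝ := 4 ^ (∑ k, m k) with hA
  have hP1 : 1 ≤ P := one_le_pow₀ (by norm_num)
  have hA1 : 1 ≤ A := one_le_pow₀ (by norm_num)
  have hms : ∀ k, m k ≤ ∑ k, m k := fun k =>
    Finset.single_le_sum (f := m) (fun _ _ => Nat.zero_le _) (Finset.mem_univ k)
  set Q : ℝ := ((2 * ∏ k, m k : ℕ) : ℝ) with hQ
  have hQ0 : 0 < Q := by
    rw [hQ]
    exact_mod_cast Nat.mul_pos (by norm_num)
      (Finset.prod_pos fun k _ => by have := hm k; omega)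
  refine ⟨Q * (P ^ d * (A * C₀)) ^ 2, by positivity, ?_⟩
  intro ks hq x y hx hy
  have G := fun k => good (ks k) C₀ hC₀ (hq k)
  set F : ((k : Fin d) → Fin ((ks k).N + m k)) → ℝ := fun j =>
    (∏ k, Bspl (ks k).T (m k) (((j k : ℕ) : ℤ) + 1) (x k) -
              ∏ k, Bspl (ks k).T (m k) (((j k : ℕ) : ℤ) + 1) (y k)) ^ 2 with hF
  set R : ℝ := (P ^ d * (A * C₀)) ^ 2 * ((∑ k, (((ks k).N + m k : ℕ) : ℝ) ^ 2) *
    ∑ k, (x k - y k) ^ 2) with hR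
  have hR0 : 0 ≤ R := by positivity
  -- pointwise bound
  have hpt : ∀ j, F j ≤ R := by
    intro j
    have h1 := prod_diff (fun k => Bspl (ks k).T (m k) (((j k : ℕ) : ℤ) + 1) (x k))
      (fun k => Bspl (ks k).T (m k) (((j k : ℕ) : ℤ) + 1) (y k)) P hP1
      (fun k => (bd (G k) _ _ _).trans (pow_le_pow_right₀ (by norm_num) (hms k)))
      (fun k => (bd (G k) _ _ _).trans (pow_le_pow_right₀ (by norm_num) (hms k))) Finset.univ
    rw [Finset.card_univ, Fintype.card_fin] at h1
    have h2 : ∀ k, |Bspl (ks k).T (m k) (((j k : ℕ) : ℤ) + 1) (x k) -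
        Bspl (ks k).T (m k) (((j k : ℕ) : ℤ) + 1) (y k)| ≤
        (A * C₀) * ((((ks k).N + m k : ℕ) : ℝ) * |x k - y k|) := by
      intro k
      have hl := lip (G k) (x k) (y k) (hx k) (hy k) (m k - 2) (((j k : ℕ) : ℤ) + 1)
      rw [Nat.sub_add_cancel (hm k)] at hl
      have hAk : (4 : ℝ) ^ (m k) ≤ A := pow_le_pow_right₀ (by norm_num) (hms k)
      have hd0 := (G k).pos
      have hmp : 0 < (ks k).mesh := by
        have := mul_pos hd0 (by linarith : 0 < C₀)
        rwa [div_mul_cancel₀ _ (by linarith : C₀ ≠ 0)] at this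
      have hm2 : (2 : ℝ) ≤ m k := by exact_mod_cast hm k
      have hJ : |x k - y k| / ((ks k).mesh / C₀) ≤
          C₀ * ((((ks k).N + m k : ℕ) : ℝ) * |x k - y k|) := by
        rw [div_le_iff₀ hd0]
        have e : C₀ * ((((ks k).N + m k : ℕ) : ℝ) * |x k - y k|) * ((ks k).mesh / C₀)
          = ((ks k).mesh * (((ks k).N + m k : ℕ) : ℝ)) * |x k - y k| := by
          field_simp
        rw [e]
        have hb : 1 ≤ (ks k).mesh * (((ks k).N + m k : ℕ) : ℝ) := by
          refine (mesh_ge (ks k)).trans ?_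
          push_cast
          exact mul_le_mul_of_nonneg_left (by linarith) hmp.le
        nlinarith [abs_nonneg (x k - y k)]
      refine hl.trans ?_
      rw [mul_assoc]
      exact mul_le_mul hAk hJ (by positivity) (by linarith)
    have h3 := h1.trans (mul_le_mul_of_nonneg_left
      (Finset.sum_le_sum fun k _ => h2 k) (by positivity : 0 ≤ P ^ d))
    rw [← Finset.mul_sum, ← mul_assoc] at h3
    have h4 := pow_le_pow_left₀ (abs_nonneg _) h3 2
    rw [sq_abs, mul_pow] at h4
    refine h4.trans ?_
    refine mul_le_mul_of_nonneg_left ?_ (by positivity)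
    have h5 := Finset.sum_mul_sq_le_sq_mul_sq Finset.univ
      (fun k => (((ks k).N + m k : ℕ) : ℝ)) (fun k => |x k - y k|)
    simpa only [sq_abs] using h5
  set S : (Fin d → ℝ) → Finset ((k : Fin d) → Fin ((ks k).N + m k)) := fun z =>
    Fintype.piFinset fun k => Finset.univ.filter fun j : Fin ((ks k).N + m k) =>
      Bspl (ks k).T (m k) (((j : ℕ) : ℤ) + 1) (z k) ≠ 0 with hS
  have hSc : ∀ z, (S z).card ≤ ∏ k, m k := fun z => by
    rw [hS, Fintype.card_piFinset]
    exact Finset.prod_le_prod' fun k _ => card_supp (G k) _ _ _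
  have hSz : ∀ z j, j ∉ S z → ∏ k, Bspl (ks k).T (m k) (((j k : ℕ) : ℤ) + 1) (z k) = 0 := by
    intro z j hj
    by_contra hne
    apply hj
    rw [hS, Fintype.mem_piFinset]
    intro k
    exact Finset.mem_filter.2 ⟨Finset.mem_univ _,
      (Finset.prod_ne_zero_iff.1 hne) k (Finset.mem_univ _)⟩
  have hsum : ∑ j, F j = ∑ j ∈ S x ∪ S y, F j := by
    symm
    refine Finset.sum_subset (Finset.subset_univ _) fun j _ hj => ?_
    rw [Finset.mem_union, not_or] at hj
    simp only [hF]
    rw [hSz x j hj.1, hSz y j hj.2]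
    simp
  rw [hsum]
  refine (Finset.sum_le_card_nsmul _ _ R fun j _ => hpt j).trans ?_
  rw [nsmul_eq_mul]
  have hc : (((S x ∪ S y).card : ℕ) : ℝ) ≤ Q := by
    rw [hQ]
    exact_mod_cast (Finset.card_union_le _ _).trans (by
      have := hSc x; have := hSc y; omega)
  refine (mul_le_mul_of_nonneg_right hc hR0).trans (le_of_eq ?_)
  rw [hR]; ring
end
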